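/- Let X be a sesquiclosed commutative scheme on Ω satisfying the e₁/e₀-condition, X' a scheme on Ω', and φ : X → X' a sesquiclosed algebraic isomorphism. With the notation X₀ = X_{Ω/e₀}, φ₀ = φ_{Ω/e₀}, and for points α ∈ Ω, α' ∈ Ω': α₀ = αe₀, α'₀ = α'e'₀, Δ the class of e₁ containing α, Δ' the class of e'₁ containing α', Δ₀ = Δ/e₀, X₁ = X_Δ, X'₁ = X'_{Δ'}, φ₁ = φ_{Δ,Δ'} — assume that (i) X₀ and X₁ are schurian and Iso(X₀, X'₀, φ₀) ≠ ∅ ≠ Iso(X₁, X'₁, φ₁), and (ii) the coherent configurations ((X₀)_{α₀})_{Δ₀} and ((X₁)_α)_{Δ₀} are partly regular. Then Iso_{α₀,α'₀}(X₀, X'₀, φ₀)^{Δ₀} = Iso_{α,α'}(X₁, X'₁, φ₁)^{Δ₀}. -/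

import Mathlib

open Set

universe u

/-- A coherent configuration on a finite set `Ω`: a partition `S` of `Ω × Ω`
satisfying (C1) the diagonal is a union of classes, (C2) closure under converse,
(C3) well-defined intersection numbers. -/
structure CohCfg (Ω : Type u) : Type u where
  S : Set (Set (Ω × Ω))
  finite : Finite Ω
  cover : ∀ p : Ω × Ω, ∃ s ∈ S, p ∈ s
  disj : ∀ s ∈ S, ∀ t ∈ S, s ≠ t → s ∩ t = ∅
  nonemp : ∀ s ∈ S, s.Nonempty
  diag : ∀ s ∈ S, (∃ p ∈ s, p.1 = p.2) → ∀ p ∈ s, p.1 = p.2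
  conv : ∀ s ∈ S, {p : Ω × Ω | (p.2, p.1) ∈ s} ∈ S
  inum : ∀ r ∈ S, ∀ s ∈ S, ∀ t ∈ S, ∀ p ∈ t, ∀ q ∈ t,
    {γ : Ω | (p.1, γ) ∈ r ∧ (γ, p.2) ∈ s}.ncard =
    {γ : Ω | (q.1, γ) ∈ r ∧ (γ, q.2) ∈ s}.ncard

namespace CohCfg

variable {Ω Ω' : Type u}

/-- The intersection number `c^t_{rs}` computed at the pair `p`. -/
noncomputable def cnum (r s : Set (Ω × Ω)) (p : Ω × Ω) : ℕ :=
  {γ : Ω | (p.1, γ) ∈ r ∧ (γ, p.2) ∈ s}.ncard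

/-- `X` is a scheme (homogeneous) if the full diagonal is a basis relation. -/
def IsScheme (X : CohCfg Ω) : Prop := {p : Ω × Ω | p.1 = p.2} ∈ X.S

/-- Commutativity: `c^t_{rs} = c^t_{sr}`. -/
def IsCommutative (X : CohCfg Ω) : Prop :=
  ∀ r ∈ X.S, ∀ s ∈ X.S, ∀ p : Ω × Ω, cnum r s p = cnum s r p

/-- `s` is a relation of `X`, i.e. a union of basis relations. -/
def IsRelationOf (X : CohCfg Ω) (s : Set (Ω × Ω)) : Prop :=
  ∀ t ∈ X.S, (t ∩ s).Nonempty → t ⊆ s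

/-- `X ≤ Y`: every (basis) relation of `X` is a relation of `Y`. -/
def le (X Y : CohCfg Ω) : Prop := ∀ s ∈ X.S, IsRelationOf Y s

/-- The diagonal relation `1_Δ` of a subset `Δ`. -/
def diagRel (Δ : Set Ω) : Set (Ω × Ω) := {p | p.1 = p.2 ∧ p.1 ∈ Δ}

/-- `Δ` is a fiber of `X`. -/
def IsFiber (X : CohCfg Ω) (Δ : Set Ω) : Prop := diagRel Δ ∈ X.S

/-- `αs = {β | (α,β) ∈ s}`. -/
def pointSet (s : Set (Ω × Ω)) (α : Ω) : Set Ω := {β | (α, β) ∈ s}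

/-- `X` is partly regular: some point `α` has `|αs| ≤ 1` for all basis relations. -/
def PartlyRegular (X : CohCfg Ω) : Prop :=
  ∃ α : Ω, ∀ s ∈ X.S, (pointSet s α).ncard ≤ 1

/-- The image `s^f` of a relation under a map of points. -/
def relImage (f : Ω → Ω') (s : Set (Ω × Ω)) : Set (Ω' × Ω') :=
  (fun p : Ω × Ω => (f p.1, f p.2)) '' s

/-- `φ` is an algebraic isomorphism from `X` to `X'`. -/
structure IsAlgIso (X : CohCfg Ω) (X' : CohCfg Ω')
    (φ : Set (Ω × Ω) → Set (Ω' × Ω')) : Prop where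
  bijOn : Set.BijOn φ X.S X'.S
  cnum_eq : ∀ r ∈ X.S, ∀ s ∈ X.S, ∀ t ∈ X.S, ∀ p ∈ t, ∀ q ∈ φ t,
    cnum r s p = cnum (φ r) (φ s) q

/-- The natural extension of an algebraic isomorphism to unions of basis relations. -/
def algImage (X : CohCfg Ω) (φ : Set (Ω × Ω) → Set (Ω' × Ω')) (s : Set (Ω × Ω)) :
    Set (Ω' × Ω') := ⋃₀ (φ '' {t | t ∈ X.S ∧ t ⊆ s})

/-- The image `Δ^φ` of a fiber under an algebraic isomorphism. -/
def fiberImage (X : CohCfg Ω) (φ : Set (Ω × Ω) → Set (Ω' × Ω')) (Δ : Set Ω) : Set Ω' :=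
  {α' | (α', α') ∈ φ (diagRel Δ)}

/-- `Y` is the point extension `X_α`: the smallest coherent configuration `≥ X`
having `1_α` as a basis relation. -/
def IsPointExt (X : CohCfg Ω) (α : Ω) (Y : CohCfg Ω) : Prop :=
  le X Y ∧ ({(α, α)} : Set (Ω × Ω)) ∈ Y.S ∧
    ∀ Z : CohCfg Ω, le X Z → ({(α, α)} : Set (Ω × Ω)) ∈ Z.S → le Y Z

/-- `φ` has an `(α,α')`-extension: an algebraic isomorphism `X_α → X'_{α'}`
extending `φ` and sending `1_α` to `1_{α'}`. -/
def HasExtension (X : CohCfg Ω) (X' : CohCfg Ω') (φ : Set (Ω × Ω) → Set (Ω' × Ω'))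
    (α : Ω) (α' : Ω') : Prop :=
  ∃ (Y : CohCfg Ω) (Y' : CohCfg Ω') (ψ : Set (Ω × Ω) → Set (Ω' × Ω')),
    IsPointExt X α Y ∧ IsPointExt X' α' Y' ∧ IsAlgIso Y Y' ψ ∧
    (∀ s ∈ X.S, algImage Y ψ s = φ s) ∧ ψ {(α, α)} = {(α', α')}

/-- A sesquiclosed algebraic isomorphism: has an `(α,α')`-extension for all
`α ∈ Δ ∈ F(X)` and `α' ∈ Δ^φ`. -/
def SesquiclosedIso (X : CohCfg Ω) (X' : CohCfg Ω')
    (φ : Set (Ω × Ω) → Set (Ω' × Ω')) : Prop :=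
  IsAlgIso X X' φ ∧
  ∀ Δ : Set Ω, IsFiber X Δ → ∀ α ∈ Δ, ∀ α' ∈ fiberImage X φ Δ, HasExtension X X' φ α α'

/-- `φ` is induced by the combinatorial isomorphism `f`. -/
def InducedBy (X : CohCfg Ω) (X' : CohCfg Ω') (φ : Set (Ω × Ω) → Set (Ω' × Ω'))
    (f : Ω → Ω') : Prop :=
  Function.Bijective f ∧ ∀ s ∈ X.S, φ s = relImage f s

/-- `X` is separable: every algebraic isomorphism from `X` is induced by an isomorphism. -/
def Separable (X : CohCfg Ω) : Prop :=
  ∀ (Ω'' : Type u) (X' : CohCfg Ω'') (φ : Set (Ω × Ω) → Set (Ω'' × Ω'')),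
    IsAlgIso X X' φ → ∃ f : Ω → Ω'', InducedBy X X' φ f

/-- `X` is sesquiseparable: every sesquiclosed algebraic isomorphism from `X`
is induced by an isomorphism. -/
def Sesquiseparable (X : CohCfg Ω) : Prop :=
  ∀ (Ω'' : Type u) (X' : CohCfg Ω'') (φ : Set (Ω × Ω) → Set (Ω'' × Ω'')),
    SesquiclosedIso X X' φ → ∃ f : Ω → Ω'', InducedBy X X' φ f

/-- A sesquiclosed coherent configuration: (S1) the fibers of every one-point
extension `X_α` are the nonempty sets `αs`, and (S2) the identity algebraic
automorphism is sesquiclosed. -/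
def SesquiclosedCfg (X : CohCfg Ω) : Prop :=
  (∀ α : Ω, ∀ Y : CohCfg Ω, IsPointExt X α Y →
     ∀ Δ : Set Ω, (IsFiber Y Δ ↔ ∃ s ∈ X.S, Δ = pointSet s α ∧ Δ.Nonempty)) ∧
  SesquiclosedIso X X id

/-- A parabolic of `X`: a relation that is an equivalence relation on `Ω`. -/
def IsParabolic (X : CohCfg Ω) (e : Set (Ω × Ω)) : Prop :=
  IsRelationOf X e ∧ (∀ a : Ω, (a, a) ∈ e) ∧ (∀ p ∈ e, (p.2, p.1) ∈ e) ∧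
    ∀ a b c : Ω, (a, b) ∈ e → (b, c) ∈ e → (a, c) ∈ e

/-- The class of `a` modulo the equivalence relation `e`. -/
def eClass (e : Set (Ω × Ω)) (a : Ω) : Set Ω := {b | (a, b) ∈ e}

/-- `Δ/e` is a section of `X`: `e` is a parabolic and `Δ` is a class of a
parabolic containing `e`. -/
def IsSection (X : CohCfg Ω) (Δ : Set Ω) (e : Set (Ω × Ω)) : Prop :=
  IsParabolic X e ∧ ∃ d : Set (Ω × Ω), IsParabolic X d ∧ e ⊆ d ∧ ∃ a : Ω, Δ = eClass d a

/-- The point set of the section `Δ/e`: the `e`-classes of points of `Δ`. -/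
abbrev Sec (Δ : Set Ω) (e : Set (Ω × Ω)) : Type u :=
  {Γ : Set Ω // ∃ a ∈ Δ, Γ = eClass e a}

/-- The relation `s_𝔖` on the section `𝔖 = Δ/e`. -/
def secRel (Δ : Set Ω) (e : Set (Ω × Ω)) (s : Set (Ω × Ω)) :
    Set (Sec Δ e × Sec Δ e) :=
  {p | ∃ a ∈ p.1.1, ∃ b ∈ p.2.1, (a, b) ∈ s}

/-- `Y` is the coherent configuration `X_𝔖` on the section `𝔖 = Δ/e`. -/
def IsSectionCfg (X : CohCfg Ω) (Δ : Set Ω) (e : Set (Ω × Ω))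
    (Y : CohCfg (Sec Δ e)) : Prop :=
  Y.S = {t | ∃ s ∈ X.S, t = secRel Δ e s ∧ t.Nonempty}

/-- The restriction `s_Δ` of a relation to a subset `Δ`. -/
def restRel (Δ : Set Ω) (s : Set (Ω × Ω)) : Set (↥Δ × ↥Δ) := {p | (p.1.1, p.2.1) ∈ s}

/-- `Y` is the restriction `X_Δ` of `X` to `Δ`. -/
def IsRestrictionCfg (X : CohCfg Ω) (Δ : Set Ω) (Y : CohCfg ↥Δ) : Prop :=
  Y.S = {t | ∃ s ∈ X.S, t = restRel Δ s ∧ t.Nonempty}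

/-- `Iso(X, X', φ)`: isomorphisms inducing the algebraic isomorphism `φ`. -/
def IsoSet (X : CohCfg Ω) (X' : CohCfg Ω') (φ : Set (Ω × Ω) → Set (Ω' × Ω')) :
    Set (Ω → Ω') :=
  {f | Function.Bijective f ∧ ∀ s ∈ X.S, relImage f s = φ s}

/-- `X` is schurian: its basis relations are the orbits of `Aut(X)` on `Ω × Ω`. -/
def Schurian (X : CohCfg Ω) : Prop :=
  ∀ s ∈ X.S, ∀ p ∈ s, ∀ q ∈ s, ∃ f : Ω → Ω,
    (Function.Bijective f ∧ ∀ t ∈ X.S, relImage f t = t) ∧ (f p.1, f p.2) = q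

/-- `e ⊆ rad(s)`: `s` is a union of products of pairs of `e`-classes it meets. -/
def RadGE (e s : Set (Ω × Ω)) : Prop :=
  ∀ p ∈ s, ∀ a b : Ω, (p.1, a) ∈ e → (p.2, b) ∈ e → (a, b) ∈ s

/-- The `e₁/e₀`-condition: every basis relation disjoint from `e₁` has `e₀` in
its radical. -/
def WedgeCond (X : CohCfg Ω) (e0 e1 : Set (Ω × Ω)) : Prop :=
  ∀ s ∈ X.S, s ∩ e1 = ∅ → RadGE e0 s

/-- A circulant coherent configuration on a group `G`: right translations are
automorphisms. -/
def IsCirculant {G : Type u} [Group G] (X : CohCfg G) : Prop :=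
  ∀ g : G, ∀ s ∈ X.S, relImage (fun x => x * g) s = s

/-- The equivalence relation `e(H)` whose classes are the cosets of `H`. -/
def eRelSet {G : Type u} [Group G] (H : Subgroup G) : Set (G × G) :=
  {p | p.1⁻¹ * p.2 ∈ H}

/-- `H` is an `X`-group. -/
def IsXGroup {G : Type u} [Group G] (X : CohCfg G) (H : Subgroup G) : Prop :=
  IsParabolic X (eRelSet H)

/-- A normal circulant scheme: every automorphism fixing the identity is a
group automorphism. -/
def IsNormalCirc {G : Type u} [Group G] (X : CohCfg G) : Prop :=
  ∀ f : G → G, Function.Bijective f → (∀ s ∈ X.S, relImage f s = s) → f 1 = 1 →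
    ∀ a b : G, f (a * b) = f a * f b

/-- Normality of a circulant scheme presented on a section `Δ/e` of a group `G`
(the points are cosets): every automorphism fixing the class of `1` respects the
coset multiplication. -/
def IsNormalSec {G : Type u} [Group G] (Δ : Set G) (e : Set (G × G))
    (Y : CohCfg (Sec Δ e)) : Prop :=
  ∀ F : Sec Δ e → Sec Δ e, Function.Bijective F → (∀ t ∈ Y.S, relImage F t = t) →
    (∀ Γ : Sec Δ e, (1 : G) ∈ Γ.1 → F Γ = Γ) →
    ∀ Γ Γ' Γ'' : Sec Δ e, Γ''.1 = Set.image2 (· * ·) Γ.1 Γ'.1 →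
      (F Γ'').1 = Set.image2 (· * ·) (F Γ).1 (F Γ').1

/-- Normality of a circulant scheme presented on (the subtype of) a subgroup `U ⊆ G`. -/
def IsNormalRest {G : Type u} [Group G] (U : Set G) (Y : CohCfg ↥U) : Prop :=
  ∀ F : ↥U → ↥U, Function.Bijective F → (∀ t ∈ Y.S, relImage F t = t) →
    (∀ x : ↥U, x.1 = 1 → F x = x) →
    ∀ x y z : ↥U, z.1 = x.1 * y.1 → (F z).1 = (F x).1 * (F y).1

/-- `N` is an `X_U`-group: `N ≤ U` and the restriction of `e(N)` to `U` is a
relation of the restriction `X_U`. -/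
def SubXGroup {G : Type u} [Group G] (X : CohCfg G) (U N : Subgroup G) : Prop :=
  N ≤ U ∧ ∀ s ∈ X.S, (∃ p ∈ s, p.1 ∈ U ∧ p.2 ∈ U ∧ p.1⁻¹ * p.2 ∈ N) →
    ∀ p ∈ s, p.1 ∈ U → p.2 ∈ U → p.1⁻¹ * p.2 ∈ N

end CohCfg

/-!
Point extensions are compared only through relations: a map `f` inducing `φ₀` on a configuration
derived from `X` transports every relation of its point extension to one corresponding to it under
the extension `ψ` of `φ`, because the relations for which this holds form a coherent configuration.
In a partly regular configuration some point determines every other point from the basis relation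
joining the two.  Hence the action of `g ∈ Iso(X₀, X'₀, φ₀)` on `Δ₀` is determined along
`ψ`-correspondence by its value at a single class, and so is that of `h ∈ Iso(X₁, X'₁, φ₁)`: if the
two agree at one well-chosen class, they agree on `Δ₀`.  Given `g`, schurity of `X₁` provides such
an `h`, and given `h`, schurity of `X₀` provides such a `g`.  Commutativity is what lets a value of
`g` be represented by a point in the right position relative to `α'`.
-/

namespace CohCfg

open scoped SetRel

section BasisRelations

variable {Ω : Type u} (X : CohCfg Ω)

/-- The basis relation `r(α, β)` of `X` containing the pair `p = (α, β)`. -/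
noncomputable def basisRel (p : Ω × Ω) : Set (Ω × Ω) := (X.cover p).choose

theorem basisRel_mem (p : Ω × Ω) : X.basisRel p ∈ X.S := (X.cover p).choose_spec.1

theorem mem_basisRel (p : Ω × Ω) : p ∈ X.basisRel p := (X.cover p).choose_spec.2

variable {X} {s : Set (Ω × Ω)} {p q : Ω × Ω}

theorem basisRel_eq_iff (hs : s ∈ X.S) : X.basisRel p = s ↔ p ∈ s := by
  refine ⟨fun h => h ▸ X.mem_basisRel p, fun hp => by_contra fun hne => ?_⟩
  have hdisj := X.disj _ (X.basisRel_mem p) s hs hne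
  exact (hdisj ▸ ⟨X.mem_basisRel p, hp⟩ : p ∈ (∅ : Set (Ω × Ω)))

theorem IsRelationOf.basisRel_subset (hs : IsRelationOf X s) (hp : p ∈ s) : X.basisRel p ⊆ s :=
  hs _ (X.basisRel_mem p) ⟨p, X.mem_basisRel p, hp⟩

theorem isRelationOf_iff_forall_basisRel :
    IsRelationOf X s ↔ ∀ p q, q ∈ X.basisRel p → (p ∈ s ↔ q ∈ s) := by
  constructor
  · intro hs p q hq
    refine ⟨fun hp => hs.basisRel_subset hp hq, fun hqs => hs.basisRel_subset hqs ?_⟩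
    rw [(basisRel_eq_iff (X.basisRel_mem p)).2 hq]
    exact X.mem_basisRel p
  · rintro h t ht ⟨p, hpt, hps⟩ q hqt
    exact (h p q (((basisRel_eq_iff ht).2 hpt).symm ▸ hqt)).1 hps

end BasisRelations

section Correspondence

variable {Ω Ω' : Type u}

/-- The pairs `p` and `q` correspond under `φ`: the basis relation of `p` is mapped to the one
of `q`. -/
def PairCorr (X : CohCfg Ω) (φ : Set (Ω × Ω) → Set (Ω' × Ω')) (p : Ω × Ω) (q : Ω' × Ω') : Prop :=
  q ∈ φ (X.basisRel p)

/-- The relations `s` and `s'` correspond under `φ`: they cannot be told apart on corresponding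
pairs. For a relation `s` of `X` this says that `s'` is the image of `s` under the extension
of `φ` to unions of basis relations. -/
def RelCorr (X : CohCfg Ω) (φ : Set (Ω × Ω) → Set (Ω' × Ω')) (s : Set (Ω × Ω))
    (s' : Set (Ω' × Ω')) : Prop :=
  ∀ p q, PairCorr X φ p q → (p ∈ s ↔ q ∈ s')

theorem relCorr_id_iff {X : CohCfg Ω} {s : Set (Ω × Ω)} :
    RelCorr X id s s ↔ IsRelationOf X s :=
  isRelationOf_iff_forall_basisRel.symm

theorem isAlgIso_id (X : CohCfg Ω) : IsAlgIso X X id where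
  bijOn := bijOn_id _
  cnum_eq := X.inum

variable {X : CohCfg Ω} {X' : CohCfg Ω'} {φ : Set (Ω × Ω) → Set (Ω' × Ω')}
  {r s : Set (Ω × Ω)} {r' s' : Set (Ω' × Ω')} {p : Ω × Ω} {q : Ω' × Ω'} {x y : Ω} {x' y' : Ω'}

theorem pairCorr_of_mem (hs : s ∈ X.S) (hp : p ∈ s) (hq : q ∈ φ s) : PairCorr X φ p q := by
  rwa [PairCorr, (basisRel_eq_iff hs).2 hp]

namespace IsAlgIso

theorem pairCorr_iff (hφ : IsAlgIso X X' φ) :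
    PairCorr X φ p q ↔ X'.basisRel q = φ (X.basisRel p) :=
  (basisRel_eq_iff (hφ.bijOn.mapsTo (X.basisRel_mem p))).symm

theorem relCorr_apply (hφ : IsAlgIso X X' φ) (hs : s ∈ X.S) : RelCorr X φ s (φ s) := by
  intro p q hpq
  rw [← basisRel_eq_iff hs, ← basisRel_eq_iff (hφ.bijOn.mapsTo hs), hφ.pairCorr_iff.1 hpq,
    hφ.bijOn.injOn.eq_iff (X.basisRel_mem p) hs]

theorem relCorr_algImage (hφ : IsAlgIso X X' φ) (hs : IsRelationOf X s) :
    RelCorr X φ s (algImage X φ s) := by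
  intro p q hpq
  constructor
  · exact fun hp => ⟨_, ⟨_, ⟨X.basisRel_mem p, hs.basisRel_subset hp⟩, rfl⟩, hpq⟩
  · rintro ⟨_, ⟨t, ⟨ht, hts⟩, rfl⟩, hq⟩
    exact hts ((hφ.relCorr_apply ht p q hpq).2 hq)

theorem exists_pairCorr_right (hφ : IsAlgIso X X' φ) (q : Ω' × Ω') : ∃ p, PairCorr X φ p q := by
  obtain ⟨s, hs, hsq⟩ := hφ.bijOn.surjOn (X'.basisRel_mem q)
  obtain ⟨p, hp⟩ := X.nonemp s hs
  exact ⟨p, pairCorr_of_mem hs hp (hsq ▸ X'.mem_basisRel q)⟩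

/-- Intersection numbers count the points `z` by their basis relations to the two ends of `p`. -/
theorem exists_equiv (hφ : IsAlgIso X X' φ) (hpq : PairCorr X φ p q) :
    ∃ σ : Ω ≃ Ω', ∀ z, PairCorr X φ (p.1, z) (q.1, σ z) ∧ PairCorr X φ (z, p.2) (σ z, q.2) := by
  let view : Ω → X'.S × X'.S := fun z =>
    (⟨_, hφ.bijOn.mapsTo (X.basisRel_mem (p.1, z))⟩, ⟨_, hφ.bijOn.mapsTo (X.basisRel_mem (z, p.2))⟩)
  let view' : Ω' → X'.S × X'.S := fun z =>
    (⟨_, X'.basisRel_mem (q.1, z)⟩, ⟨_, X'.basisRel_mem (z, q.2)⟩)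
  have := X.finite
  have := X'.finite
  have hcard : ∀ k, Nonempty ({z // view z = k} ≃ {z // view' z = k}) := by
    rintro ⟨⟨_, hr'⟩, ⟨_, hs'⟩⟩
    obtain ⟨r, hr, rfl⟩ := hφ.bijOn.surjOn hr'
    obtain ⟨s, hs, rfl⟩ := hφ.bijOn.surjOn hs'
    have hcnum := hφ.cnum_eq r hr s hs _ (X.basisRel_mem p) p (X.mem_basisRel p) q hpq
    simp only [view, view', Prod.mk.injEq, Subtype.mk.injEq,
      hφ.bijOn.injOn.eq_iff (X.basisRel_mem _) hr, hφ.bijOn.injOn.eq_iff (X.basisRel_mem _) hs,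
      basisRel_eq_iff hr, basisRel_eq_iff hs, basisRel_eq_iff hr', basisRel_eq_iff hs']
    exact Finite.card_eq.1 hcnum
  refine ⟨Equiv.ofFiberEquiv fun k => (hcard k).some, fun z => ?_⟩
  have hview := Equiv.ofFiberEquiv_map (fun k => (hcard k).some) z
  exact ⟨hφ.pairCorr_iff.2 (congrArg (fun k => k.1.1) hview),
    hφ.pairCorr_iff.2 (congrArg (fun k => k.2.1) hview)⟩

theorem exists_right (hφ : IsAlgIso X X' φ) (h : PairCorr X φ (x, y) (x', y')) (z : Ω) :
    ∃ z', PairCorr X φ (x, z) (x', z') ∧ PairCorr X φ (z, y) (z', y') := by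
  obtain ⟨σ, hσ⟩ := hφ.exists_equiv h
  exact ⟨σ z, hσ z⟩

theorem exists_left (hφ : IsAlgIso X X' φ) (h : PairCorr X φ (x, y) (x', y')) (z' : Ω') :
    ∃ z, PairCorr X φ (x, z) (x', z') ∧ PairCorr X φ (z, y) (z', y') := by
  obtain ⟨σ, hσ⟩ := hφ.exists_equiv h
  obtain ⟨z, rfl⟩ := σ.surjective z'
  exact ⟨z, hσ z⟩

theorem ncard_pointSet_eq (hφ : IsAlgIso X X' φ) (hs : RelCorr X φ s s')
    (h : PairCorr X φ (x, y) (x', y')) : (pointSet s x).ncard = (pointSet s' x').ncard := by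
  obtain ⟨σ, hσ⟩ := hφ.exists_equiv h
  exact Nat.card_congr (σ.subtypeEquiv fun z => hs _ _ (hσ z).1)

theorem eq_of_pairCorr_diag (hφ : IsAlgIso X X' φ) (h : PairCorr X φ (x, y) (x', x')) :
    x = y := by
  obtain ⟨z', hxx, hxy⟩ := hφ.exists_right h x
  have hr := X.basisRel_mem (x, y)
  have hz' : z' = x' :=
    X'.diag _ (hφ.bijOn.mapsTo hr) ⟨_, h, rfl⟩ _
      ((hφ.relCorr_apply hr _ _ hxy).1 (X.mem_basisRel _))
  subst hz'
  exact X.diag _ hr ⟨_, (hφ.relCorr_apply hr _ _ hxx).2 h, rfl⟩ _ (X.mem_basisRel _)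

theorem fst_eq_snd_iff (hφ : IsAlgIso X X' φ) (h : PairCorr X φ (x, y) (x', y')) :
    x = y ↔ x' = y' := by
  refine ⟨?_, fun hxy => hφ.eq_of_pairCorr_diag (hxy ▸ h)⟩
  rintro rfl
  obtain ⟨z, hxz, -⟩ := hφ.exists_left h x'
  obtain rfl := hφ.eq_of_pairCorr_diag hxz
  exact X'.diag _ (hφ.bijOn.mapsTo (X.basisRel_mem _)) ⟨_, hxz, rfl⟩ _ h

theorem pairCorr_diag_left (hφ : IsAlgIso X X' φ) (h : PairCorr X φ (x, y) (x', y')) :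
    PairCorr X φ (x, x) (x', x') := by
  obtain ⟨z', hxz, -⟩ := hφ.exists_right h x
  rwa [← (hφ.fst_eq_snd_iff hxz).1 rfl] at hxz

theorem pairCorr_diag_right (hφ : IsAlgIso X X' φ) (h : PairCorr X φ (x, y) (x', y')) :
    PairCorr X φ (y, y) (y', y') := by
  obtain ⟨z', -, hzy⟩ := hφ.exists_right h y
  rwa [(hφ.fst_eq_snd_iff hzy).1 rfl] at hzy

theorem pairCorr_swap (hφ : IsAlgIso X X' φ) (h : PairCorr X φ (x, y) (x', y')) :
    PairCorr X φ (y, x) (y', x') := by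
  obtain ⟨z', hxz, hzx⟩ := hφ.exists_right (hφ.pairCorr_diag_left h) y
  have hconv := X'.conv _ (X'.basisRel_mem (z', x'))
  have hmem : (x', z') ∈ {p : Ω' × Ω' | (p.2, p.1) ∈ X'.basisRel (z', x')} :=
    X'.mem_basisRel (z', x')
  rw [← basisRel_eq_iff hconv, hφ.pairCorr_iff.1 hxz, ← hφ.pairCorr_iff.1 h] at hmem
  exact (hφ.pairCorr_iff.1 hzx).subset (hmem.subset (X'.mem_basisRel (x', y')))

theorem relCorr_comp (hφ : IsAlgIso X X' φ) (hr : RelCorr X φ r r')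
    (hs : RelCorr X φ s s') : RelCorr X φ (r ○ s) (r' ○ s') := by
  rintro ⟨x, y⟩ ⟨x', y'⟩ h
  constructor
  · rintro ⟨z, hxz, hzy⟩
    obtain ⟨z', hxz', hzy'⟩ := hφ.exists_right h z
    exact ⟨z', (hr _ _ hxz').1 hxz, (hs _ _ hzy').1 hzy⟩
  · rintro ⟨z', hxz', hzy'⟩
    obtain ⟨z, hxz, hzy⟩ := hφ.exists_left h z'
    exact ⟨z, (hr _ _ hxz).2 hxz', (hs _ _ hzy).2 hzy'⟩

end IsAlgIso

theorem isRelationOf_of_mem (hs : s ∈ X.S) : IsRelationOf X s :=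
  relCorr_id_iff.1 ((isAlgIso_id X).relCorr_apply hs)

theorem IsRelationOf.comp (hr : IsRelationOf X r) (hs : IsRelationOf X s) :
    IsRelationOf X (r ○ s) :=
  relCorr_id_iff.1
    ((isAlgIso_id X).relCorr_comp (relCorr_id_iff.2 hr) (relCorr_id_iff.2 hs))

theorem le.isRelationOf {Y : CohCfg Ω} (h : le X Y) (hs : IsRelationOf X s) :
    IsRelationOf Y s := by
  rintro t ht ⟨p, hpt, hps⟩
  exact (h _ (X.basisRel_mem p) t ht ⟨p, hpt, X.mem_basisRel p⟩).trans (hs.basisRel_subset hps)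

theorem singleton_mem_of_isRelationOf (h : IsRelationOf X {p}) : ({p} : Set (Ω × Ω)) ∈ X.S := by
  rw [← (h.basisRel_subset (mem_singleton p)).antisymm (singleton_subset_iff.2 (X.mem_basisRel p))]
  exact X.basisRel_mem p

end Correspondence

section CoherentFamilies

variable {D : Type u} {F : Set (Set (D × D))}

/-- The closure properties of the set of all relations of a coherent configuration: `level` is
the counterpart of the existence of intersection numbers. -/
structure CoherentFamily (F : Set (Set (D × D))) : Prop where
  compl : ∀ s ∈ F, sᶜ ∈ F
  sInter : ∀ G ⊆ F, ⋂₀ G ∈ F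
  diag : {p : D × D | p.1 = p.2} ∈ F
  inv : ∀ s ∈ F, SetRel.inv s ∈ F
  level : ∀ r ∈ F, ∀ s ∈ F, ∀ n : ℕ, {p : D × D | cnum r s p = n} ∈ F

/-- The smallest member of a family of relations that contains the pair `p`. -/
def cell (F : Set (Set (D × D))) (p : D × D) : Set (D × D) := ⋂₀ {s ∈ F | p ∈ s}

theorem mem_cell (p : D × D) : p ∈ cell F p := fun _ hs => hs.2

theorem cell_subset {s : Set (D × D)} {p : D × D} (hs : s ∈ F) (hp : p ∈ s) : cell F p ⊆ s :=
  sInter_subset_of_mem ⟨hs, hp⟩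

namespace CoherentFamily

theorem cell_mem (hF : CoherentFamily F) (p : D × D) : cell F p ∈ F :=
  hF.sInter _ (sep_subset _ _)

theorem cell_eq_of_mem (hF : CoherentFamily F) {p q : D × D} (hq : q ∈ cell F p) :
    cell F q = cell F p := by
  refine (cell_subset (hF.cell_mem p) hq).antisymm (cell_subset (hF.cell_mem q) ?_)
  by_contra hp
  exact cell_subset (hF.compl _ (hF.cell_mem q)) hp hq (mem_cell q)

theorem inv_cell (hF : CoherentFamily F) (p : D × D) :
    SetRel.inv (cell F p) = cell F p.swap :=
  Subset.antisymm
    (fun _ hq s hs => cell_subset (hF.inv s hs.1) hs.2 hq)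
    (cell_subset (hF.inv _ (hF.cell_mem p)) (mem_cell p))

theorem sUnion_mem (hF : CoherentFamily F) {G : Set (Set (D × D))} (hG : G ⊆ F) : ⋃₀ G ∈ F := by
  rw [sUnion_eq_compl_sInter_compl]
  exact hF.compl _ (hF.sInter _ (image_subset_iff.2 fun s hs => hF.compl s (hG hs)))

/-- The coherent configuration whose basis relations are the cells of a coherent family. -/
def toCohCfg [Finite D] (hF : CoherentFamily F) : CohCfg D where
  S := range (cell F)
  finite := inferInstance
  cover p := ⟨_, mem_range_self p, mem_cell p⟩
  disj := by
    rintro _ ⟨p, rfl⟩ _ ⟨q, rfl⟩ hne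
    refine eq_empty_of_forall_notMem fun r hr => hne ?_
    rw [← hF.cell_eq_of_mem hr.1, hF.cell_eq_of_mem hr.2]
  nonemp := by
    rintro _ ⟨p, rfl⟩
    exact ⟨p, mem_cell p⟩
  diag := by
    rintro _ ⟨p, rfl⟩ ⟨q, hq, hdiag⟩
    rw [← hF.cell_eq_of_mem hq]
    exact fun r hr => cell_subset hF.diag hdiag hr
  conv := by
    rintro _ ⟨p, rfl⟩
    exact ⟨_, (hF.inv_cell p).symm⟩
  inum := by
    rintro _ ⟨r, rfl⟩ _ ⟨s, rfl⟩ _ ⟨t, rfl⟩ p hp q hq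
    rw [← hF.cell_eq_of_mem hp] at hq
    exact (cell_subset (hF.level _ (hF.cell_mem r) _ (hF.cell_mem s) _) rfl hq).symm

theorem isRelationOf_toCohCfg_iff [Finite D] (hF : CoherentFamily F) {t : Set (D × D)} :
    IsRelationOf hF.toCohCfg t ↔ t ∈ F := by
  constructor
  · intro ht
    have hcells : t = ⋃₀ (cell F '' t) := by
      refine Subset.antisymm (fun p hp => ⟨_, mem_image_of_mem _ hp, mem_cell p⟩) ?_
      rintro q ⟨_, ⟨p, hp, rfl⟩, hq⟩
      exact ht _ (mem_range_self p) ⟨p, mem_cell p, hp⟩ hq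
    rw [hcells]
    exact hF.sUnion_mem (image_subset_iff.2 fun p _ => hF.cell_mem p)
  · rintro ht _ ⟨p, rfl⟩ ⟨q, hq, hqt⟩
    rw [← hF.cell_eq_of_mem hq]
    exact cell_subset ht hqt

end CoherentFamily

end CoherentFamilies

section PartialSurjections

variable {Ω Ω' D D' : Type u} {P : SetRel Ω D} {P' : SetRel Ω' D'} {x y : Ω} {c d : D}

/-- `P` is the graph of a surjection onto `D` from a subset of `Ω`. Both the passage from `Ω`
to a quotient and the passage to a restriction are of this form. -/
structure IsPartialSurj (P : SetRel Ω D) : Prop where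
  unique : ∀ {x c d}, (x, c) ∈ P → (x, d) ∈ P → c = d
  exists_mem : ∀ d, ∃ x, (x, d) ∈ P

/-- The relation on `Ω` obtained by pulling `t` back along `P`. -/
def lift (P : SetRel Ω D) (t : Set (D × D)) : Set (Ω × Ω) := P ○ t ○ P.inv

/-- The relation "having the same image under `P`", on the domain of `P`. -/
def kernel (P : SetRel Ω D) : Set (Ω × Ω) := P ○ P.inv

namespace IsPartialSurj

theorem finite [Finite Ω] (hP : IsPartialSurj P) : Finite D := by
  choose f hf using hP.exists_mem
  exact Finite.of_injective f fun c d hcd => hP.unique (hf c) (hcd ▸ hf d)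

theorem mem_lift_iff (hP : IsPartialSurj P) {t : Set (D × D)} (hx : (x, c) ∈ P)
    (hy : (y, d) ∈ P) : (x, y) ∈ lift P t ↔ (c, d) ∈ t := by
  constructor
  · rintro ⟨d', ⟨c', hc', ht⟩, hd'⟩
    rwa [hP.unique hx hc', hP.unique hy hd']
  · exact fun ht => ⟨d, ⟨c, hx, ht⟩, hy⟩

theorem mem_kernel_iff (hP : IsPartialSurj P) (hx : (x, c) ∈ P) (hy : (y, d) ∈ P) :
    (x, y) ∈ kernel P ↔ c = d := by
  constructor
  · rintro ⟨d', hc', hd'⟩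
    rw [hP.unique hx hc', hP.unique hy hd']
  · rintro rfl
    exact ⟨c, hx, hy⟩

theorem pointSet_kernel (hP : IsPartialSurj P) (hx : (x, d) ∈ P) :
    pointSet (kernel P) x = {y | (y, d) ∈ P} := by
  ext y
  constructor
  · rintro ⟨c, hxc, hyc⟩
    exact hP.unique hxc hx ▸ hyc
  · exact fun hy => ⟨d, hx, hy⟩

/-- With every point weighted by the inverse of the size of its kernel class, the points of `D` are
counted inside `Ω`, where intersection numbers are available. -/
theorem ncard_eq_finsum [Finite Ω] (hP : IsPartialSurj P) (A : Set D) :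
    (A.ncard : ℚ) = ∑ᶠ x ∈ P.preimage A, ((pointSet (kernel P) x).ncard : ℚ)⁻¹ := by
  have := hP.finite
  have hcard : ∀ {α : Type u} [Finite α] (s : Set α), (s.ncard : ℚ) = ∑ᶠ _ ∈ s, 1 := by
    intro α _ s
    rw [← finsum_one, Nat.cast_finsum_mem (toFinite s), Nat.cast_one]
  have hfibre : ∀ d, ∑ᶠ x ∈ {x | (x, d) ∈ P}, ((pointSet (kernel P) x).ncard : ℚ)⁻¹ = 1 := by
    intro d
    obtain ⟨x, hx⟩ := hP.exists_mem d
    have hpos : ({x | (x, d) ∈ P}.ncard : ℚ) ≠ 0 :=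
      Nat.cast_ne_zero.2 (ncard_ne_zero_of_mem (a := x) hx)
    rw [finsum_mem_congr rfl fun y hy => by
      rw [hP.pointSet_kernel hy, ← one_mul ({x | (x, d) ∈ P}.ncard : ℚ)⁻¹],
      ← finsum_mem_mul, ← hcard, mul_inv_cancel₀ hpos]
  have hunion : P.preimage A = ⋃ d ∈ A, {x | (x, d) ∈ P} := by
    ext x
    simp [SetRel.preimage]
  have hdisj : A.PairwiseDisjoint fun d => {x | (x, d) ∈ P} := fun c _ d _ hcd =>
    disjoint_left.2 fun x hc hd => hcd (hP.unique hc hd)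
  rw [hunion, finsum_mem_biUnion hdisj (toFinite A) fun _ _ => toFinite _,
    finsum_mem_congr rfl fun d _ => hfibre d, hcard]

theorem cnum_eq_finsum [Finite Ω] (hP : IsPartialSurj P) (hx : (x, c) ∈ P) (hy : (y, d) ∈ P)
    (r s : Set (D × D)) :
    (cnum r s (c, d) : ℚ) = ∑ᶠ z ∈ {z | (x, z) ∈ lift P r ∧ (z, y) ∈ lift P s},
      ((pointSet (kernel P) z).ncard : ℚ)⁻¹ := by
  suffices P.preimage {e | (c, e) ∈ r ∧ (e, d) ∈ s} =
      {z | (x, z) ∈ lift P r ∧ (z, y) ∈ lift P s} by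
    rw [cnum, hP.ncard_eq_finsum, this]
  ext z
  constructor
  · rintro ⟨e, ⟨hr, hs⟩, hz⟩
    exact ⟨(hP.mem_lift_iff hx hz).2 hr, (hP.mem_lift_iff hz hy).2 hs⟩
  · rintro ⟨⟨e, ⟨c', hc', hr⟩, hz⟩, hs⟩
    exact ⟨e, ⟨hP.unique hc' hx ▸ hr, (hP.mem_lift_iff hz hy).1 hs⟩, hz⟩

end IsPartialSurj

theorem mem_dom_iff_mem_kernel : x ∈ P.dom ↔ (x, x) ∈ kernel P :=
  exists_congr fun _ => (and_self_iff).symm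

section Transfer

variable {X : CohCfg Ω} {X' : CohCfg Ω'} {φ : Set (Ω × Ω) → Set (Ω' × Ω')}
  {t : Set (D × D)} {t' : Set (D' × D')} {r s : Set (D × D)} {r' s' : Set (D' × D')}

theorem relCorr_lift_iff (hφ : IsAlgIso X X' φ) (hP : IsPartialSurj P) (hP' : IsPartialSurj P')
    (hker : RelCorr X φ (kernel P) (kernel P')) :
    RelCorr X φ (lift P t) (lift P' t') ↔ ∀ {x y x' y' c d c' d'},
      PairCorr X φ (x, y) (x', y') → (x, c) ∈ P → (y, d) ∈ P → (x', c') ∈ P' → (y', d') ∈ P' →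
        ((c, d) ∈ t ↔ (c', d') ∈ t') := by
  have hdom : ∀ {z z'}, PairCorr X φ (z, z) (z', z') → (z ∈ P.dom ↔ z' ∈ P'.dom) := by
    intro z z' hz
    rw [mem_dom_iff_mem_kernel, mem_dom_iff_mem_kernel, hker _ _ hz]
  constructor
  · intro h x y x' y' c d c' d' hxy hx hy hx' hy'
    rw [← hP.mem_lift_iff hx hy, h _ _ hxy, hP'.mem_lift_iff hx' hy']
  · rintro h ⟨x, y⟩ ⟨x', y'⟩ hxy
    have hdomx := hdom (hφ.pairCorr_diag_left hxy)
    have hdomy := hdom (hφ.pairCorr_diag_right hxy)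
    constructor
    · rintro ⟨d, ⟨c, hx, ht⟩, hy⟩
      obtain ⟨c', hx'⟩ := hdomx.1 ⟨c, hx⟩
      obtain ⟨d', hy'⟩ := hdomy.1 ⟨d, hy⟩
      exact (hP'.mem_lift_iff hx' hy').2 ((h hxy hx hy hx' hy').1 ht)
    · rintro ⟨d', ⟨c', hx', ht'⟩, hy'⟩
      obtain ⟨c, hx⟩ := hdomx.2 ⟨c', hx'⟩
      obtain ⟨d, hy⟩ := hdomy.2 ⟨d', hy'⟩
      exact (hP.mem_lift_iff hx hy).2 ((h hxy hx hy hx' hy').2 ht')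

theorem relCorr_lift_cnum (hφ : IsAlgIso X X' φ) (hP : IsPartialSurj P) (hP' : IsPartialSurj P')
    (hker : RelCorr X φ (kernel P) (kernel P')) (hr : RelCorr X φ (lift P r) (lift P' r'))
    (hs : RelCorr X φ (lift P s) (lift P' s')) (n : ℕ) :
    RelCorr X φ (lift P {p | cnum r s p = n}) (lift P' {p | cnum r' s' p = n}) := by
  rw [relCorr_lift_iff hφ hP hP' hker]
  intro x y x' y' c d c' d' hxy hx hy hx' hy'
  have := X.finite
  have := X'.finite
  suffices (cnum r s (c, d) : ℚ) = cnum r' s' (c', d') from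
    Eq.congr_left (Nat.cast_injective this)
  obtain ⟨σ, hσ⟩ := hφ.exists_equiv hxy
  rw [hP.cnum_eq_finsum hx hy, hP'.cnum_eq_finsum hx' hy']
  refine finsum_mem_eq_of_bijOn σ (σ.bijOn fun z => ?_) fun z _ => ?_
  · exact and_congr (hr _ _ (hσ z).1).symm (hs _ _ (hσ z).2).symm
  · rw [hφ.ncard_pointSet_eq hker (hφ.pairCorr_diag_right (hσ z).1)]

theorem coherentFamily_relCorr_lift {P' : SetRel Ω' D} (hφ : IsAlgIso X X' φ)
    (hP : IsPartialSurj P) (hP' : IsPartialSurj P')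
    (hker : RelCorr X φ (kernel P) (kernel P')) :
    CoherentFamily {t : Set (D × D) | RelCorr X φ (lift P t) (lift P' t)} where
  compl t ht := by
    rw [mem_ofPred_eq, relCorr_lift_iff hφ hP hP' hker] at ht ⊢
    exact fun h hx hy hx' hy' => not_congr (ht h hx hy hx' hy')
  sInter G hG := by
    refine (relCorr_lift_iff hφ hP hP' hker).2 fun h hx hy hx' hy' => ?_
    exact forall₂_congr fun t ht =>
      (relCorr_lift_iff hφ hP hP' hker).1 (hG ht) h hx hy hx' hy'
  diag := by
    refine (relCorr_lift_iff hφ hP hP' hker).2 fun h hx hy hx' hy' => ?_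
    exact (hP.mem_kernel_iff hx hy).symm.trans
      ((hker _ _ h).trans (hP'.mem_kernel_iff hx' hy'))
  inv t ht := by
    rw [mem_ofPred_eq, relCorr_lift_iff hφ hP hP' hker] at ht ⊢
    exact fun h hx hy hx' hy' => ht (hφ.pairCorr_swap h) hy hx hy' hx'
  level r hr s hs n := relCorr_lift_cnum hφ hP hP' hker hr hs n

theorem coherentFamily_isRelationOf_lift (hP : IsPartialSurj P)
    (hker : IsRelationOf X (kernel P)) :
    CoherentFamily {t : Set (D × D) | IsRelationOf X (lift P t)} := by
  have hfamily := coherentFamily_relCorr_lift (isAlgIso_id X) hP hP (relCorr_id_iff.2 hker)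
  simpa only [relCorr_id_iff] using hfamily

theorem isPartialSurj_id : IsPartialSurj (SetRel.id : SetRel Ω Ω) where
  unique := by
    rintro x _ _ rfl rfl
    rfl
  exists_mem x := ⟨x, rfl⟩

theorem lift_id (s : Set (Ω × Ω)) : lift SetRel.id s = s := by
  rw [lift, SetRel.inv_id, SetRel.comp_id, SetRel.id_comp]

theorem isRelationOf_diag (X : CohCfg Ω) : IsRelationOf X {p | p.1 = p.2} :=
  relCorr_id_iff.1 fun _ _ h => (isAlgIso_id X).fst_eq_snd_iff h

theorem coherentFamily_isRelationOf (X : CohCfg Ω) : CoherentFamily {s | IsRelationOf X s} := by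
  have hfamily := coherentFamily_isRelationOf_lift (X := X) isPartialSurj_id (by
    rw [kernel, SetRel.inv_id, SetRel.comp_id]
    exact isRelationOf_diag X)
  simpa only [lift_id] using hfamily

end Transfer

theorem exists_isPointExt (X : CohCfg Ω) (α : Ω) : ∃ Y, IsPointExt X α Y := by
  have hF : CoherentFamily {s | ∀ Z : CohCfg Ω, le X Z → {(α, α)} ∈ Z.S → IsRelationOf Z s} :=
    { compl := fun s hs Z hle hα => (coherentFamily_isRelationOf Z).compl s (hs Z hle hα)
      sInter := fun G hG Z hle hα =>
        (coherentFamily_isRelationOf Z).sInter G fun s hs => hG hs Z hle hα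
      diag := fun Z _ _ => (coherentFamily_isRelationOf Z).diag
      inv := fun s hs Z hle hα => (coherentFamily_isRelationOf Z).inv s (hs Z hle hα)
      level := fun r hr s hs n Z hle hα =>
        (coherentFamily_isRelationOf Z).level r (hr Z hle hα) s (hs Z hle hα) n }
  have := X.finite
  refine ⟨hF.toCohCfg, fun s hs => ?_, singleton_mem_of_isRelationOf ?_, fun Z hle hα s hs => ?_⟩
  · exact hF.isRelationOf_toCohCfg_iff.2 fun Z hle _ => hle s hs
  · exact hF.isRelationOf_toCohCfg_iff.2 fun Z _ hα => isRelationOf_of_mem hα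
  · exact hF.isRelationOf_toCohCfg_iff.1 (isRelationOf_of_mem hs) Z hle hα

/-- The image of the relation `s` under the partial surjection `P`. -/
def push (P : SetRel Ω D) (s : Set (Ω × Ω)) : Set (D × D) := P.inv ○ s ○ P

theorem mem_push_of_mem {s : Set (Ω × Ω)} (hx : (x, c) ∈ P) (hy : (y, d) ∈ P) (hs : (x, y) ∈ s) :
    (c, d) ∈ push P s :=
  ⟨y, ⟨x, hx, hs⟩, hy⟩

theorem lift_push (P : SetRel Ω D) (s : Set (Ω × Ω)) :
    lift P (push P s) = kernel P ○ s ○ kernel P := by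
  simp only [lift, push, kernel, SetRel.comp_assoc]

/-- `Y` is the configuration that `X` induces on `D` through the partial surjection `P`, such as
a quotient or a restriction of `X`. -/
def IsImageCfg (X : CohCfg Ω) (P : SetRel Ω D) (Y : CohCfg D) : Prop :=
  Y.S = {t | ∃ s ∈ X.S, t = push P s ∧ t.Nonempty}

namespace IsPartialSurj

theorem push_subset (hP : IsPartialSurj P) {s : Set (Ω × Ω)} {t : Set (D × D)}
    (h : s ⊆ lift P t) : push P s ⊆ t := by
  rintro ⟨c, d⟩ ⟨y, ⟨x, hx, hs⟩, hy⟩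
  exact (hP.mem_lift_iff hx hy).1 (h hs)

theorem push_singleton (hP : IsPartialSurj P) (hx : (x, c) ∈ P) :
    push P {(x, x)} = {(c, c)} := by
  refine (hP.push_subset ?_).antisymm ?_
  · exact singleton_subset_iff.2 ((hP.mem_lift_iff hx hx).2 rfl)
  · exact singleton_subset_iff.2 (mem_push_of_mem hx hx rfl)

theorem exists_isImageCfg (hP : IsPartialSurj P) {Z : CohCfg Ω}
    (hker : IsRelationOf Z (kernel P)) : ∃ W : CohCfg D, IsImageCfg Z P W := by
  have := Z.finite
  have := hP.finite
  have hF := coherentFamily_isRelationOf_lift hP hker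
  have hbasis : ∀ {x y c d}, (x, c) ∈ P → (y, d) ∈ P →
      hF.toCohCfg.basisRel (c, d) = push P (Z.basisRel (x, y)) := by
    intro x y c d hx hy
    have hpush : IsRelationOf hF.toCohCfg (push P (Z.basisRel (x, y))) := by
      rw [hF.isRelationOf_toCohCfg_iff, mem_ofPred_eq, lift_push]
      exact (hker.comp (isRelationOf_of_mem (Z.basisRel_mem _))).comp hker
    have hlift : IsRelationOf Z (lift P (hF.toCohCfg.basisRel (c, d))) :=
      hF.isRelationOf_toCohCfg_iff.1 (isRelationOf_of_mem (basisRel_mem _ _))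
    refine (hpush.basisRel_subset (mem_push_of_mem hx hy (Z.mem_basisRel _))).antisymm ?_
    exact hP.push_subset (hlift.basisRel_subset ((hP.mem_lift_iff hx hy).2 (mem_basisRel _ _)))
  refine ⟨hF.toCohCfg, Subset.antisymm (fun t ht => ?_) ?_⟩
  · obtain ⟨⟨c, d⟩, hcd⟩ := hF.toCohCfg.nonemp t ht
    obtain ⟨x, hx⟩ := hP.exists_mem c
    obtain ⟨y, hy⟩ := hP.exists_mem d
    exact ⟨_, Z.basisRel_mem (x, y), by rw [← hbasis hx hy, (basisRel_eq_iff ht).2 hcd], ⟨_, hcd⟩⟩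
  · rintro _ ⟨s, hs, rfl, ⟨c, d⟩, y, ⟨x, hx, hxy⟩, hy⟩
    rw [← (basisRel_eq_iff hs).2 hxy, ← hbasis hx hy]
    exact basisRel_mem _ _

end IsPartialSurj

/-- The relations that lift to corresponding ones form a coherent family, so that the minimality of
the point extension applies. -/
theorem relCorr_lift_of_isPointExt {Z : CohCfg Ω} {Z' : CohCfg Ω'}
    {ψ : Set (Ω × Ω) → Set (Ω' × Ω')} {P' : SetRel Ω' D} {Y W : CohCfg D} {α : Ω} {α' : Ω'} {a : D}
    (hψ : IsAlgIso Z Z' ψ) (hP : IsPartialSurj P) (hP' : IsPartialSurj P')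
    (hker : RelCorr Z ψ (kernel P) (kernel P'))
    (hY : ∀ t ∈ Y.S, RelCorr Z ψ (lift P t) (lift P' t))
    (hα : RelCorr Z ψ {(α, α)} {(α', α')}) (ha : (α, a) ∈ P) (ha' : (α', a) ∈ P')
    (hW : IsPointExt Y a W) {t : Set (D × D)} (ht : IsRelationOf W t) :
    RelCorr Z ψ (lift P t) (lift P' t) := by
  have := Y.finite
  have hF := coherentFamily_relCorr_lift hψ hP hP' hker
  have hpoint := hψ.relCorr_comp (hψ.relCorr_comp hker hα) hker
  rw [← lift_push, ← lift_push, hP.push_singleton ha, hP'.push_singleton ha'] at hpoint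
  have hle : le W hF.toCohCfg := hW.2.2 _
    (fun t ht => hF.isRelationOf_toCohCfg_iff.2 (hY t ht))
    (singleton_mem_of_isRelationOf (hF.isRelationOf_toCohCfg_iff.2 hpoint))
  exact hF.isRelationOf_toCohCfg_iff.1 (hle.isRelationOf ht)

end PartialSurjections

section InducedMaps

variable {Ω Ω' D D' : Type u} {X : CohCfg Ω} {X' : CohCfg Ω'} {φ : Set (Ω × Ω) → Set (Ω' × Ω')}
  {P : SetRel Ω D} {P' : SetRel Ω' D'} {Y : CohCfg D} {Y' : CohCfg D'}
  {φ₀ : Set (D × D) → Set (D' × D')} {f : D → D'} {x y : Ω} {x' y' : Ω'} {c d : D} {c' d' : D'}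

namespace IsImageCfg

theorem push_basisRel_mem (hY : IsImageCfg X P Y) (hx : (x, c) ∈ P) (hy : (y, d) ∈ P) :
    push P (X.basisRel (x, y)) ∈ Y.S := by
  rw [hY]
  exact ⟨_, X.basisRel_mem _, rfl, _, mem_push_of_mem hx hy (X.mem_basisRel _)⟩

theorem isRelationOf_push (hP : IsPartialSurj P) (hY : IsImageCfg X P Y) {s : Set (Ω × Ω)}
    (hs : IsRelationOf X s) (hsat : kernel P ○ s ○ kernel P ⊆ s) : IsRelationOf Y (push P s) := by
  intro t ht
  rw [hY] at ht
  obtain ⟨r, hr, rfl, -⟩ := ht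
  rintro ⟨⟨c, d⟩, ⟨y, ⟨x, hx, hxy⟩, hy⟩, hcd⟩
  rw [← lift_push] at hsat
  have hrs : r ⊆ s := hs r hr ⟨_, hxy, hsat ((hP.mem_lift_iff hx hy).2 hcd)⟩
  rintro ⟨c, d⟩ ⟨y, ⟨x, hx, hxy⟩, hy⟩
  exact mem_push_of_mem hx hy (hrs hxy)

theorem exists_mem_kernel_of_partlyRegular (hP : IsPartialSurj P) (hY : IsImageCfg X P Y)
    (hker : IsRelationOf X (kernel P)) (hreg : PartlyRegular Y) :
    ∃ x ∈ P.dom, ∀ u, (x, u) ∈ kernel P → ∀ y ∈ P.dom, ∀ v, PairCorr X id (x, y) (u, v) →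
      (y, v) ∈ kernel P := by
  obtain ⟨c, hc⟩ := hreg
  obtain ⟨x, hx⟩ := hP.exists_mem c
  refine ⟨x, ⟨c, hx⟩, ?_⟩
  rintro u ⟨c', hxc', hu⟩ y ⟨d, hy⟩ v h
  obtain rfl := hP.unique hx hxc'
  obtain ⟨e, hv⟩ : v ∈ P.dom := by
    rw [mem_dom_iff_mem_kernel,
      ← relCorr_id_iff.2 hker _ _ ((isAlgIso_id X).pairCorr_diag_right h),
      ← mem_dom_iff_mem_kernel]
    exact ⟨d, hy⟩
  have := Y.finite
  have hde : d = e := (ncard_le_one (toFinite _)).1 (hc _ (hY.push_basisRel_mem hx hy)) d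
    (mem_push_of_mem hx hy (X.mem_basisRel _)) e (mem_push_of_mem hu hv h)
  exact (hP.mem_kernel_iff hy hv).2 hde

end IsImageCfg

/-- `φ₀` is the map induced by the algebraic isomorphism `φ` on the configuration that `X` induces
through `P`; the target of `φ` is read through `P'`. -/
structure IsInducedMap (X : CohCfg Ω) (φ : Set (Ω × Ω) → Set (Ω' × Ω')) (P : SetRel Ω D)
    (P' : SetRel Ω' D') (Y : CohCfg D) (φ₀ : Set (D × D) → Set (D' × D')) : Prop where
  source : IsPartialSurj P
  target : IsPartialSurj P'
  isImageCfg : IsImageCfg X P Y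
  map_push : ∀ s ∈ X.S, (push P s).Nonempty → φ₀ (push P s) = push P' (φ s)

/-- `Iso_{β,β'}(Y, Y', ψ)`: the isomorphisms inducing `ψ` that send `β` to `β'`. -/
def pointedIsoSet (Y : CohCfg D) (Y' : CohCfg D') (φ₀ : Set (D × D) → Set (D' × D'))
    (β : D) (β' : D') : Set (D → D') :=
  {f ∈ IsoSet Y Y' φ₀ | f β = β'}

theorem comp_mem_isoSet {k : D → D} (hf : f ∈ IsoSet Y Y' φ₀) (hk : k ∈ IsoSet Y Y id) :
    f ∘ k ∈ IsoSet Y Y' φ₀ := by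
  refine ⟨hf.1.comp hk.1, fun t ht => ?_⟩
  calc relImage (f ∘ k) t = relImage f (relImage k t) := by
        simp only [relImage, image_image, Function.comp_apply]
    _ = φ₀ t := by rw [hk.2 t ht, id, hf.2 t ht]

theorem Schurian.exists_pointedIso (hY : Schurian Y) (hne : (IsoSet Y Y' φ₀).Nonempty)
    {t : Set (D × D)} (ht : t ∈ Y.S) (hcd : (c, d) ∈ t) (hcd' : (c', d') ∈ φ₀ t) :
    ∃ f ∈ pointedIsoSet Y Y' φ₀ c c', f d = d' := by
  obtain ⟨f, hf⟩ := hne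
  rw [← hf.2 t ht] at hcd'
  obtain ⟨⟨u, v⟩, huv, himage⟩ := hcd'
  obtain ⟨hu, hv⟩ := Prod.ext_iff.1 himage
  obtain ⟨k, hk, hkcd⟩ := hY t ht _ hcd _ huv
  obtain ⟨hkc, hkd⟩ := Prod.ext_iff.1 hkcd
  exact ⟨f ∘ k, ⟨comp_mem_isoSet hf hk, (congrArg f hkc).trans hu⟩, (congrArg f hkd).trans hv⟩

namespace IsInducedMap

theorem map_mem_push (hI : IsInducedMap X φ P P' Y φ₀) (hf : f ∈ IsoSet Y Y' φ₀)
    (hx : (x, c) ∈ P) (hy : (y, d) ∈ P) : (f c, f d) ∈ push P' (φ (X.basisRel (x, y))) := by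
  have hcd : (c, d) ∈ push P (X.basisRel (x, y)) := mem_push_of_mem hx hy (X.mem_basisRel _)
  rw [← hI.map_push _ (X.basisRel_mem _) ⟨_, hcd⟩,
    ← hf.2 _ (hI.isImageCfg.push_basisRel_mem hx hy)]
  exact mem_image_of_mem _ hcd

theorem exists_pointedIso (hI : IsInducedMap X φ P P' Y φ₀) (hY : Schurian Y)
    (hne : (IsoSet Y Y' φ₀).Nonempty) (hx : (x, c) ∈ P) (hy : (y, d) ∈ P) (hx' : (x', c') ∈ P')
    (hy' : (y', d') ∈ P') (h : PairCorr X φ (x, y) (x', y')) :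
    ∃ f ∈ pointedIsoSet Y Y' φ₀ c c', f d = d' := by
  have hcd : (c, d) ∈ push P (X.basisRel (x, y)) := mem_push_of_mem hx hy (X.mem_basisRel _)
  refine hY.exists_pointedIso hne (hI.isImageCfg.push_basisRel_mem hx hy) hcd ?_
  rw [hI.map_push _ (X.basisRel_mem _) ⟨_, hcd⟩]
  exact mem_push_of_mem hx' hy' h

end IsInducedMap

/-- The relation between `Ω'` and `D` obtained from `P'` by renaming the points of `D'` along
`f`. -/
def pullback (f : D → D') (P' : SetRel Ω' D') : SetRel Ω' D := {p | (p.1, f p.2) ∈ P'}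

theorem isPartialSurj_pullback (hf : Function.Bijective f) (hP' : IsPartialSurj P') :
    IsPartialSurj (pullback f P') where
  unique hc hd := hf.1 (hP'.unique hc hd)
  exists_mem d := hP'.exists_mem (f d)

theorem kernel_pullback (hf : Function.Surjective f) : kernel (pullback f P') = kernel P' := by
  ext p
  exact (hf.exists (p := fun d' => (p.1, d') ∈ P' ∧ (d', p.2) ∈ P'.inv)).symm

theorem lift_pullback (t : Set (D × D)) : lift (pullback f P') t = lift P' (relImage f t) := by
  ext ⟨x', y'⟩
  constructor
  · rintro ⟨d, ⟨c, hx, ht⟩, hy⟩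
    exact ⟨f d, ⟨f c, hx, mem_image_of_mem _ ht⟩, hy⟩
  · rintro ⟨_, ⟨_, hx, ⟨c, d⟩, ht, himage⟩, hy⟩
    obtain ⟨rfl, rfl⟩ := Prod.ext_iff.1 himage
    exact ⟨d, ⟨c, hx, ht⟩, hy⟩

/-- `ψ` is an algebraic isomorphism of refinements that extends `φ` and sends `α` to `α'`. -/
structure IsPointedExtension (X : CohCfg Ω) (φ : Set (Ω × Ω) → Set (Ω' × Ω')) (α : Ω) (α' : Ω')
    (Z : CohCfg Ω) (Z' : CohCfg Ω') (ψ : Set (Ω × Ω) → Set (Ω' × Ω')) : Prop where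
  isAlgIso : IsAlgIso Z Z' ψ
  relCorr_apply : ∀ s ∈ X.S, RelCorr Z ψ s (φ s)
  point : RelCorr Z ψ {(α, α)} {(α', α')}

theorem HasExtension.exists_isPointedExtension {α : Ω} {α' : Ω'} (h : HasExtension X X' φ α α') :
    ∃ Z Z' ψ, IsPointExt X α Z ∧ IsPointedExtension X φ α α' Z Z' ψ := by
  obtain ⟨Z, Z', ψ, hZ, -, hψ, hext, hα⟩ := h
  exact ⟨Z, Z', ψ, hZ, hψ, fun s hs => hext s hs ▸ hψ.relCorr_algImage (hZ.1 s hs),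
    hα ▸ hψ.relCorr_apply hZ.2.1⟩

namespace IsPointedExtension

variable {α : Ω} {α' : Ω'} {Z : CohCfg Ω} {Z' : CohCfg Ω'} {ψ : Set (Ω × Ω) → Set (Ω' × Ω')}

theorem pairCorr (hψ : IsPointedExtension X φ α α' Z Z' ψ) {p : Ω × Ω} {q : Ω' × Ω'}
    (h : PairCorr Z ψ p q) : PairCorr X φ p q :=
  (hψ.relCorr_apply _ (X.basisRel_mem p) p q h).1 (X.mem_basisRel p)

theorem relCorr (hψ : IsPointedExtension X φ α α' Z Z' ψ) {s : Set (Ω × Ω)}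
    {s' : Set (Ω' × Ω')} (h : RelCorr X φ s s') : RelCorr Z ψ s s' :=
  fun p q hpq => h p q (hψ.pairCorr hpq)

/-- The isomorphism `f` lets one compare both sides through `D`, to which the transfer of
correspondences to point extensions applies. -/
theorem relCorr_lift_relImage (hψ : IsPointedExtension X φ α α' Z Z' ψ)
    (hI : IsInducedMap X φ P P' Y φ₀) (hker : RelCorr Z ψ (kernel P) (kernel P'))
    (hα : (α, c) ∈ P) (hα' : (α', c') ∈ P') (hf : f ∈ pointedIsoSet Y Y' φ₀ c c') {W : CohCfg D}
    (hW : IsPointExt Y c W) {t : Set (D × D)} (ht : IsRelationOf W t) :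
    RelCorr Z ψ (lift P t) (lift P' (relImage f t)) := by
  rw [← lift_pullback]
  have hker' : RelCorr Z ψ (kernel P) (kernel (pullback f P')) := by
    rwa [kernel_pullback hf.1.1.2]
  refine relCorr_lift_of_isPointExt hψ.isAlgIso hI.source
    (isPartialSurj_pullback hf.1.1 hI.target) hker' (fun t ht => ?_) hψ.point hα
    (by rwa [pullback, mem_ofPred_eq, hf.2]) hW ht
  rw [lift_pullback, hf.1.2 t ht]
  rw [hI.isImageCfg] at ht
  obtain ⟨s, hs, rfl, hne⟩ := ht
  rw [hI.map_push s hs hne, lift_push, lift_push]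
  exact hψ.isAlgIso.relCorr_comp (hψ.isAlgIso.relCorr_comp hker (hψ.relCorr_apply s hs)) hker

end IsPointedExtension

end InducedMaps

section Propagation

variable {Ω Ω' D D' E : Type u} {X Z : CohCfg Ω} {X' Z' : CohCfg Ω'}
  {φ ψ : Set (Ω × Ω) → Set (Ω' × Ω')} {P : SetRel Ω D} {P' : SetRel Ω' D'} {Q : SetRel D E}
  {Y : CohCfg D} {Y' : CohCfg D'} {φ₀ : Set (D × D) → Set (D' × D')} {α : Ω} {α' : Ω'} {Δ : Set Ω}

/-- The relation `M` between `Ω` and `Ω'` propagates from `b` over `Δ` along `ψ`-correspondence: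
it relates `c ∈ Δ` to `c'` as soon as it relates `b` to some `b'` such that `(b, c)` and `(b', c')`
correspond. -/
def Propagates (Z : CohCfg Ω) (ψ : Set (Ω × Ω) → Set (Ω' × Ω')) (Δ : Set Ω) (M : SetRel Ω Ω')
    (b : Ω) : Prop :=
  ∀ c ∈ Δ, ∀ b' c', PairCorr Z ψ (b, c) (b', c') → (b, b') ∈ M → (c, c') ∈ M

theorem Propagates.exists_common {M₀ M₁ : SetRel Ω Ω'} {b₀ b₁ c : Ω} {b₀' : Ω'}
    (h₀ : Propagates Z ψ Δ M₀ b₀) (h₁ : Propagates Z ψ Δ M₁ b₁) (hψ : IsAlgIso Z Z' ψ)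
    (hb : PairCorr Z ψ (b₀, b₀) (b₀', b₀')) (hM₀ : (b₀, b₀') ∈ M₀) (hb₁ : b₁ ∈ Δ)
    (hM₁ : ∀ b₁', (b₁, b₁') ∈ M₀ → (b₁, b₁') ∈ M₁) (hc : c ∈ Δ) :
    ∃ c', (c, c') ∈ M₀ ∧ (c, c') ∈ M₁ := by
  obtain ⟨b₁', hb₁', -⟩ := hψ.exists_right hb b₁
  obtain ⟨c', hb₀c, hcb₁⟩ := hψ.exists_right hb₁' c
  exact ⟨c', h₀ c hc _ _ hb₀c hM₀,
    h₁ c hc _ _ (hψ.pairCorr_swap hcb₁) (hM₁ b₁' (h₀ b₁ hb₁ _ _ hb₁' hM₀))⟩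

/-- The relation between `Ω` and `Ω'` induced by a map `f : D → D'` up to the relation `N`
on `D`. -/
def matchRel (P : SetRel Ω D) (P' : SetRel Ω' D') (N : Set (D × D)) (f : D → D') : SetRel Ω Ω' :=
  {p | ∃ c d, (p.1, c) ∈ P ∧ (c, d) ∈ N ∧ (p.2, f d) ∈ P'}

theorem IsPointedExtension.exists_propagates {a : D} {a' : D'}
    (hψ : IsPointedExtension X φ α α' Z Z' ψ) (hI : IsInducedMap X φ P P' Y φ₀)
    (hker : RelCorr Z ψ (kernel P) (kernel P')) (ha : (α, a) ∈ P) (ha' : (α', a') ∈ P')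
    (hQ : IsPartialSurj Q) (hkerQ : ∀ W, IsPointExt Y a W → IsRelationOf W (kernel Q))
    (hreg : ∀ W, IsPointExt Y a W → ∀ V, IsImageCfg W Q V → PartlyRegular V) :
    ∃ b ∈ (P ○ Q).dom, ∀ f ∈ pointedIsoSet Y Y' φ₀ a a',
      Propagates Z ψ (P ○ Q).dom (matchRel P P' (kernel Q) f) b := by
  obtain ⟨W, hW⟩ := exists_isPointExt Y a
  obtain ⟨V, hV⟩ := hQ.exists_isImageCfg (hkerQ W hW)
  obtain ⟨d, ⟨δ, hδ⟩, hrigid⟩ :=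
    hV.exists_mem_kernel_of_partlyRegular hQ (hkerQ W hW) (hreg W hW V hV)
  obtain ⟨b, hb⟩ := hI.source.exists_mem d
  refine ⟨b, ⟨δ, d, hb, hδ⟩, fun f hf => ?_⟩
  rintro c ⟨ε, e, hc, hε⟩ b' c' h ⟨d₁, u, hb₁, hdu, hb'⟩
  obtain rfl := hI.source.unique hb hb₁
  obtain ⟨_, ⟨_, hb'₁, ⟨u₁, v⟩, huv, himage⟩, hc'⟩ :=
    (hψ.relCorr_lift_relImage hI hker ha ha' hf hW (isRelationOf_of_mem (W.basisRel_mem (d, e)))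
      _ _ h).1 ((hI.source.mem_lift_iff hb hc).2 (W.mem_basisRel _))
  obtain ⟨rfl, rfl⟩ := Prod.ext_iff.1 himage
  obtain rfl : u₁ = u := hf.1.1.1 (hI.target.unique hb'₁ hb')
  exact ⟨e, v, hc, hrigid _ hdu e ⟨ε, hε⟩ v huv, hc'⟩

theorem IsAlgIso.mem_pointSet_iff {s : Set (Ω × Ω)} {s' : Set (Ω' × Ω')} {x y : Ω} {x' y' : Ω'}
    (hψ : IsAlgIso Z Z' ψ) (hα : RelCorr Z ψ {(α, α)} {(α', α')}) (hs : RelCorr Z ψ s s')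
    (h : PairCorr Z ψ (x, y) (x', y')) : y ∈ pointSet s α ↔ y' ∈ pointSet s' α' := by
  have hcomp := hψ.relCorr_comp (s := s) (r := univ ○ {(α, α)})
    (hψ.relCorr_comp (r := univ) (r' := univ) (fun _ _ _ => Iff.rfl) hα) hs _ _ h
  simpa [SetRel.mem_comp, pointSet] using hcomp

theorem IsAlgIso.relCorr_diagRel_pointSet {s : Set (Ω × Ω)} {s' : Set (Ω' × Ω')}
    (hψ : IsAlgIso Z Z' ψ) (hα : RelCorr Z ψ {(α, α)} {(α', α')}) (hs : RelCorr Z ψ s s') :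
    RelCorr Z ψ (diagRel (pointSet s α)) (diagRel (pointSet s' α')) := fun _ _ h =>
  and_congr (hψ.fst_eq_snd_iff h)
    (hψ.mem_pointSet_iff hα hs (hψ.pairCorr_diag_left h))

theorem IsPointExt.isRelationOf_diagRel_pointSet {s : Set (Ω × Ω)} (hZ : IsPointExt X α Z)
    (hs : IsRelationOf X s) : IsRelationOf Z (diagRel (pointSet s α)) :=
  relCorr_id_iff.1 ((isAlgIso_id Z).relCorr_diagRel_pointSet
    (relCorr_id_iff.2 (isRelationOf_of_mem hZ.2.1)) (relCorr_id_iff.2 (hZ.1.isRelationOf hs)))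

/-- By (S1), the basis relation of `(α, b)` alone determines the fiber of `b` in the point
extension. -/
theorem IsPointedExtension.pairCorr_diag {b : Ω} {b' : Ω'}
    (hψ : IsPointedExtension X φ α α' Z Z' ψ)
    (hfiber : ∀ s ∈ X.S, (pointSet s α).Nonempty → IsFiber Z (pointSet s α))
    (h : PairCorr X φ (α, b) (α', b')) : PairCorr Z ψ (b, b) (b', b') := by
  have hs := X.basisRel_mem (α, b)
  have hb : b ∈ pointSet (X.basisRel (α, b)) α := X.mem_basisRel _
  obtain ⟨⟨u, v⟩, huv⟩ := hψ.isAlgIso.exists_pairCorr_right (b', b')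
  have hv := (hψ.isAlgIso.mem_pointSet_iff hψ.point (hψ.relCorr_apply _ hs) huv).2 h
  obtain rfl := hψ.isAlgIso.eq_of_pairCorr_diag huv
  rw [PairCorr, (basisRel_eq_iff (hfiber _ hs ⟨b, hb⟩)).2 ⟨rfl, hv⟩] at huv
  exact pairCorr_of_mem (hfiber _ hs ⟨b, hb⟩) ⟨rfl, hb⟩ huv

end Propagation

section Classes

variable {Ω : Type u} {Δ : Set Ω} {e : Set (Ω × Ω)} {x a b : Ω}

theorem IsParabolic.equivalence {X : CohCfg Ω} (he : IsParabolic X e) :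
    Equivalence fun a b => (a, b) ∈ e :=
  ⟨he.2.1, fun {a b} hab => he.2.2.1 (a, b) hab, fun {a b c} => he.2.2.2 a b c⟩

/-- The class of `a` modulo `e`, as a point of the quotient. -/
def classOf (e : Set (Ω × Ω)) (a : Ω) : Sec (univ : Set Ω) e := ⟨eClass e a, a, mem_univ a, rfl⟩

theorem classOf_surjective : Function.Surjective (classOf e) := by
  rintro ⟨_, a, -, rfl⟩
  exact ⟨a, rfl⟩

theorem eClass_eq_iff (he : Equivalence fun a b => (a, b) ∈ e) :
    eClass e a = eClass e b ↔ (a, b) ∈ e := by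
  refine ⟨fun h => h.superset (he.refl b), fun hab => ?_⟩
  ext c
  exact ⟨he.trans (he.symm hab), he.trans hab⟩

theorem mem_sec_iff (he : Equivalence fun a b => (a, b) ∈ e) (Γ : Sec Δ e) :
    x ∈ Γ.1 ↔ Γ.1 = eClass e x := by
  obtain ⟨_, a, -, rfl⟩ := Γ
  exact (eClass_eq_iff he).symm

theorem classOf_eq_iff (he : Equivalence fun a b => (a, b) ∈ e) :
    classOf e a = classOf e b ↔ (a, b) ∈ e :=
  Subtype.ext_iff.trans (eClass_eq_iff he)

theorem mem_sec_iff_eq_classOf (he : Equivalence fun a b => (a, b) ∈ e)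
    (G : Sec (univ : Set Ω) e) : x ∈ G.1 ↔ G = classOf e x := by
  rw [mem_sec_iff he, Subtype.ext_iff, classOf]

/-- The projection of `Ω` onto the set of classes of `e`, as a relation. -/
def classRel (e : Set (Ω × Ω)) : SetRel Ω (Sec (univ : Set Ω) e) := {p | p.1 ∈ p.2.1}

theorem mem_classRel_classOf (he : Equivalence fun a b => (a, b) ∈ e) (a : Ω) :
    (a, classOf e a) ∈ classRel e :=
  he.refl a

theorem isPartialSurj_classRel (he : Equivalence fun a b => (a, b) ∈ e) :
    IsPartialSurj (classRel e) where
  unique hc hd :=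
    ((mem_sec_iff_eq_classOf he _).1 hc).trans ((mem_sec_iff_eq_classOf he _).1 hd).symm
  exists_mem := classOf_surjective.forall.2 fun a => ⟨a, mem_classRel_classOf he a⟩

theorem kernel_classRel (he : Equivalence fun a b => (a, b) ∈ e) : kernel (classRel e) = e := by
  ext ⟨x, y⟩
  rw [(isPartialSurj_classRel he).mem_kernel_iff (mem_classRel_classOf he x)
    (mem_classRel_classOf he y), classOf_eq_iff he]

theorem push_classRel (s : Set (Ω × Ω)) : push (classRel e) s = secRel univ e s := by
  ext ⟨G, H⟩
  constructor
  · rintro ⟨b, ⟨a, ha, hab⟩, hb⟩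
    exact ⟨a, ha, b, hb, hab⟩
  · rintro ⟨a, ha, b, hb, hab⟩
    exact ⟨b, ⟨a, ha, hab⟩, hb⟩

theorem isImageCfg_classRel_iff {X : CohCfg Ω} {Y : CohCfg (Sec (univ : Set Ω) e)} :
    IsImageCfg X (classRel e) Y ↔ IsSectionCfg X univ e Y := by
  simp only [IsImageCfg, IsSectionCfg, push_classRel]

/-- The inverse of the inclusion of `Δ` into `Ω`, as a relation. -/
def inclRel (Δ : Set Ω) : SetRel Ω ↥Δ := {p | p.1 = p.2.1}

theorem mem_inclRel (d : ↥Δ) : (d.1, d) ∈ inclRel Δ := rfl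

theorem isPartialSurj_inclRel (Δ : Set Ω) : IsPartialSurj (inclRel Δ) where
  unique hc hd := Subtype.ext (Eq.trans (Eq.symm hc) hd)
  exists_mem d := ⟨d.1, rfl⟩

theorem kernel_inclRel (Δ : Set Ω) : kernel (inclRel Δ) = diagRel Δ := by
  ext ⟨x, y⟩
  constructor
  · rintro ⟨d, hx, hy⟩
    exact ⟨Eq.trans hx (Eq.symm hy), Eq.symm hx ▸ d.2⟩
  · rintro ⟨hxy, hx⟩
    exact ⟨⟨x, hx⟩, rfl, Eq.symm hxy⟩

theorem push_inclRel (s : Set (Ω × Ω)) : push (inclRel Δ) s = restRel Δ s := by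
  ext ⟨c, d⟩
  constructor
  · rintro ⟨y, ⟨x, hx, hxy⟩, hy⟩
    obtain ⟨rfl, rfl⟩ : x = c.1 ∧ y = d.1 := ⟨hx, hy⟩
    exact hxy
  · exact fun h => ⟨d.1, ⟨c.1, rfl, h⟩, rfl⟩

theorem isImageCfg_inclRel_iff {X : CohCfg Ω} {Y : CohCfg ↥Δ} :
    IsImageCfg X (inclRel Δ) Y ↔ IsRestrictionCfg X Δ Y := by
  simp only [IsImageCfg, IsRestrictionCfg, push_inclRel]

theorem IsRestrictionCfg.isRelationOf_restRel {X : CohCfg Ω} {X₁ : CohCfg ↥Δ}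
    (hX₁ : IsRestrictionCfg X Δ X₁) {s : Set (Ω × Ω)} (hs : IsRelationOf X s) :
    IsRelationOf X₁ (restRel Δ s) := by
  rw [← push_inclRel]
  refine (isImageCfg_inclRel_iff.2 hX₁).isRelationOf_push (isPartialSurj_inclRel Δ) hs ?_
  rw [kernel_inclRel]
  rintro ⟨a, d⟩ ⟨c, ⟨b, ⟨hab, -⟩, hbc⟩, ⟨hcd, -⟩⟩
  obtain ⟨rfl, rfl⟩ : a = b ∧ c = d := ⟨hab, hcd⟩
  exact hbc

end Classes

section Chains

variable {Ω Ω' : Type u} {X Z : CohCfg Ω} {X' Z' : CohCfg Ω'}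
  {φ ψ : Set (Ω × Ω) → Set (Ω' × Ω')} {e₀ e₁ : Set (Ω × Ω)} {e₀' e₁' : Set (Ω' × Ω')}
  {α : Ω} {α' : Ω'}

theorem isInducedMap_classRel {Y₀ : CohCfg (Sec (univ : Set Ω) e₀)}
    {φ₀ : Set (Sec (univ : Set Ω) e₀ × Sec (univ : Set Ω) e₀) →
      Set (Sec (univ : Set Ω') e₀' × Sec (univ : Set Ω') e₀')}
    (he : Equivalence fun a b => (a, b) ∈ e₀) (he' : Equivalence fun a b => (a, b) ∈ e₀')
    (hY₀ : IsSectionCfg X univ e₀ Y₀)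
    (hφ₀ : ∀ s ∈ X.S, φ₀ (secRel univ e₀ s) = secRel univ e₀' (φ s)) :
    IsInducedMap X φ (classRel e₀) (classRel e₀') Y₀ φ₀ where
  source := isPartialSurj_classRel he
  target := isPartialSurj_classRel he'
  isImageCfg := isImageCfg_classRel_iff.2 hY₀
  map_push s hs _ := by rw [push_classRel, push_classRel, hφ₀ s hs]

theorem isInducedMap_inclRel {Δ : Set Ω} {Δ' : Set Ω'} {X₁ : CohCfg ↥Δ}
    {φ₁ : Set (↥Δ × ↥Δ) → Set (↥Δ' × ↥Δ')} (hX₁ : IsRestrictionCfg X Δ X₁)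
    (hφ₁ : ∀ s ∈ X.S, (restRel Δ s).Nonempty → φ₁ (restRel Δ s) = restRel Δ' (φ s)) :
    IsInducedMap X φ (inclRel Δ) (inclRel Δ') X₁ φ₁ where
  source := isPartialSurj_inclRel Δ
  target := isPartialSurj_inclRel Δ'
  isImageCfg := isImageCfg_inclRel_iff.2 hX₁
  map_push s hs hne := by
    rw [push_inclRel] at hne
    rw [push_inclRel, push_inclRel, hφ₁ s hs hne]

theorem IsInducedMap.pairCorr_coe {Δ : Set Ω} {Δ' : Set Ω'} {X₁ : CohCfg ↥Δ} {X₁' : CohCfg ↥Δ'}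
    {φ₁ : Set (↥Δ × ↥Δ) → Set (↥Δ' × ↥Δ')} {h : ↥Δ → ↥Δ'}
    (hI : IsInducedMap X φ (inclRel Δ) (inclRel Δ') X₁ φ₁) (hh : h ∈ IsoSet X₁ X₁' φ₁)
    (x y : ↥Δ) : PairCorr X φ (x, y) (h x, h y) := by
  have hxy := hI.map_mem_push hh (mem_inclRel x) (mem_inclRel y)
  rwa [push_inclRel] at hxy

theorem relImage_restRel {Δ : Set Ω} {Δ' : Set Ω'} {h : ↥Δ → ↥Δ'} (hh : Function.Surjective h)
    {s : Set (Ω × Ω)} {s' : Set (Ω' × Ω')}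
    (hs : ∀ x y, (x.1, y.1) ∈ s ↔ ((h x).1, (h y).1) ∈ s') :
    relImage h (restRel Δ s) = restRel Δ' s' := by
  ext p
  obtain ⟨⟨x, y⟩, rfl⟩ := (hh.prodMap hh) p
  constructor
  · rintro ⟨⟨u, v⟩, huv, himage⟩
    exact himage ▸ (hs u v).1 huv
  · exact fun hxy => ⟨(x, y), (hs x y).2 hxy, rfl⟩

theorem RelCorr.subset {r s : Set (Ω × Ω)} {r' s' : Set (Ω' × Ω')} (hr : RelCorr X φ r r')
    (hs : RelCorr X φ s s') (hφ : IsAlgIso X X' φ) (hrs : r ⊆ s) : r' ⊆ s' := by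
  intro q hq
  obtain ⟨p, hpq⟩ := hφ.exists_pairCorr_right q
  exact (hs p q hpq).1 (hrs ((hr p q hpq).2 hq))

theorem IsCommutative.comp_subset {r s : Set (Ω × Ω)} (hX : IsCommutative X)
    (hr : IsRelationOf X r) (hs : s ∈ X.S) : r ○ s ⊆ s ○ r := by
  rintro ⟨x, y⟩ ⟨z, hxz, hzy⟩
  have := X.finite
  have hpos : 0 < cnum (X.basisRel (x, z)) s (x, y) :=
    (ncard_pos (toFinite _)).2 ⟨z, X.mem_basisRel _, hzy⟩
  rw [hX _ (X.basisRel_mem _) s hs] at hpos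
  obtain ⟨w, hxw, hwy⟩ := (ncard_pos (toFinite _)).1 hpos
  exact ⟨w, hxw, hr.basisRel_subset hxz hwy⟩

/-- A chain `e₀ ⊆ e₁` of equivalence relations. -/
structure IsEquivChain (e₀ e₁ : Set (Ω × Ω)) : Prop where
  equivalence₀ : Equivalence fun a b => (a, b) ∈ e₀
  equivalence₁ : Equivalence fun a b => (a, b) ∈ e₁
  subset : e₀ ⊆ e₁

/-- The algebraic isomorphism `φ` takes the chain `e₀ ⊆ e₁` of parabolics of `X` to the equivalence
relations `e₀'` and `e₁'`. -/
structure IsParabolicChain (X : CohCfg Ω) (φ : Set (Ω × Ω) → Set (Ω' × Ω'))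
    (e₀ e₁ : Set (Ω × Ω)) (e₀' e₁' : Set (Ω' × Ω')) : Prop extends IsEquivChain e₀ e₁ where
  isRelationOf₀ : IsRelationOf X e₀
  isRelationOf₁ : IsRelationOf X e₁
  equivalence₀' : Equivalence fun a b => (a, b) ∈ e₀'
  equivalence₁' : Equivalence fun a b => (a, b) ∈ e₁'
  relCorr₀ : RelCorr X φ e₀ e₀'
  relCorr₁ : RelCorr X φ e₁ e₁'

/-- The section `Δ/e₀`, where `Δ` is the class of `α` modulo `e₁`, as the set of those points of
the quotient by `e₀` that meet `Δ`. -/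
def block (e₀ e₁ : Set (Ω × Ω)) (α : Ω) : Set (Sec (univ : Set Ω) e₀) :=
  {G | (G.1 ∩ eClass e₁ α).Nonempty}

/-- The maps `g` of the quotient by `e₀` and `h` of `Δ` induce the same map on `Δ/e₀`. -/
def Agree (e₀ : Set (Ω × Ω)) (e₀' : Set (Ω' × Ω')) {Δ : Set Ω} {Δ' : Set Ω'}
    (g : Sec (univ : Set Ω) e₀ → Sec (univ : Set Ω') e₀') (h : ↥Δ → ↥Δ') : Prop :=
  ∀ c : ↥Δ, g (classOf e₀ c) = classOf e₀' (h c)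

namespace Agree

variable {Δ : Set Ω} {Δ' : Set Ω'} {g : Sec (univ : Set Ω) e₀ → Sec (univ : Set Ω') e₀'}
  {h : ↥Δ → ↥Δ'}

theorem forall_eq_iff_forall_mem (hgh : Agree e₀ e₀' g h)
    (he : Equivalence fun a b => (a, b) ∈ e₀) (he' : Equivalence fun a b => (a, b) ∈ e₀')
    {k : Sec Δ e₀ → Sec Δ' e₀'} :
    (∀ (Γ : Sec Δ e₀) (G : Sec (univ : Set Ω) e₀), Γ.1 = G.1 → (k Γ).1 = (g G).1) ↔
      ∀ (Γ : Sec Δ e₀) (a : ↥Δ), a.1 ∈ Γ.1 → (h a).1 ∈ (k Γ).1 := by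
  constructor
  · intro hk Γ a ha
    rw [hk Γ (classOf e₀ a) ((mem_sec_iff he Γ).1 ha), hgh a]
    exact he'.refl _
  · intro hk Γ G hΓ
    obtain ⟨a, ha, hΓa⟩ := Γ.2
    have hG : G = classOf e₀ a := Subtype.ext (hΓ.symm.trans hΓa)
    rw [hG, hgh ⟨a, ha⟩]
    exact (mem_sec_iff he' _).1 (hk Γ ⟨a, ha⟩ (hΓa ▸ he.refl a))

theorem inter_nonempty (hgh : Agree e₀ e₀' g h) (he : Equivalence fun a b => (a, b) ∈ e₀)
    (he' : Equivalence fun a b => (a, b) ∈ e₀') (G : Sec (univ : Set Ω) e₀)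
    (hG : (G.1 ∩ Δ).Nonempty) : ((g G).1 ∩ Δ').Nonempty := by
  obtain ⟨x, hxG, hx⟩ := hG
  rw [(mem_sec_iff_eq_classOf he G).1 hxG, hgh ⟨x, hx⟩]
  exact ⟨_, he'.refl _, (h ⟨x, hx⟩).2⟩

end Agree

namespace IsEquivChain

theorem classOf_mem_block_iff (hc : IsEquivChain e₀ e₁) {a : Ω} :
    classOf e₀ a ∈ block e₀ e₁ α ↔ a ∈ eClass e₁ α := by
  constructor
  · rintro ⟨b, hab, hαb⟩
    exact hc.equivalence₁.trans hαb
      (hc.equivalence₁.symm (hc.subset hab))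
  · exact fun hαa => ⟨a, hc.equivalence₀.refl a, hαa⟩

theorem pointSet_push_classRel (hc : IsEquivChain e₀ e₁) :
    pointSet (push (classRel e₀) e₁) (classOf e₀ α) = block e₀ e₁ α := by
  ext G
  constructor
  · rintro ⟨b, ⟨a, hαa, hab⟩, hb⟩
    exact ⟨b, hb, hc.equivalence₁.trans (hc.subset hαa) hab⟩
  · rintro ⟨b, hb, hαb⟩
    exact mem_push_of_mem (mem_classRel_classOf hc.equivalence₀ α) hb hαb

theorem comp_comp_subset (hc : IsEquivChain e₀ e₁) :
    e₀ ○ e₁ ○ e₀ ⊆ e₁ := by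
  rintro ⟨a, d⟩ ⟨c, ⟨b, hab, hbc⟩, hcd⟩
  have he₁ := hc.equivalence₁
  exact he₁.trans (he₁.trans (hc.subset hab) hbc) (hc.subset hcd)

theorem isRelationOf_diagRel_block (hc : IsEquivChain e₀ e₁) (he₁ : IsRelationOf X e₁)
    {Y₀ W : CohCfg (Sec (univ : Set Ω) e₀)} (hY₀ : IsImageCfg X (classRel e₀) Y₀)
    (hW : IsPointExt Y₀ (classOf e₀ α) W) :
    IsRelationOf W (diagRel (block e₀ e₁ α)) := by
  have hpush : IsRelationOf Y₀ (push (classRel e₀) e₁) := by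
    refine hY₀.isRelationOf_push (isPartialSurj_classRel hc.equivalence₀) he₁ ?_
    rw [kernel_classRel hc.equivalence₀]
    exact hc.comp_comp_subset
  rw [← hc.pointSet_push_classRel]
  exact hW.isRelationOf_diagRel_pointSet hpush

theorem mem_matchRel_classRel_iff (hc : IsEquivChain e₀ e₁)
    (he' : Equivalence fun a b => (a, b) ∈ e₀')
    {g : Sec (univ : Set Ω) e₀ → Sec (univ : Set Ω') e₀'} {x : Ω} {x' : Ω'} :
    (x, x') ∈ matchRel (classRel e₀) (classRel e₀') (diagRel (block e₀ e₁ α)) g ↔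
      x ∈ eClass e₁ α ∧ g (classOf e₀ x) = classOf e₀' x' := by
  have he := hc.equivalence₀
  constructor
  · rintro ⟨G, H, hG, ⟨hGH, hA⟩, hH⟩
    obtain rfl : G = H := hGH
    obtain rfl : G = classOf e₀ x := (mem_sec_iff_eq_classOf he G).1 hG
    exact ⟨hc.classOf_mem_block_iff.1 hA, (mem_sec_iff_eq_classOf he' _).1 hH⟩
  · rintro ⟨hx, hg⟩
    exact ⟨classOf e₀ x, classOf e₀ x, mem_classRel_classOf he x,
      ⟨rfl, hc.classOf_mem_block_iff.2 hx⟩, (mem_sec_iff_eq_classOf he' _).2 hg⟩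

theorem dom_classRel_comp_inclRel (hc : IsEquivChain e₀ e₁) :
    (classRel e₀ ○ inclRel (block e₀ e₁ α)).dom = eClass e₁ α := by
  have he := hc.equivalence₀
  ext x
  constructor
  · rintro ⟨δ, G, hG, hGδ⟩
    obtain rfl : G = δ.1 := hGδ
    exact hc.classOf_mem_block_iff.1 ((mem_sec_iff_eq_classOf he _).1 hG ▸ δ.2)
  · exact fun hx => ⟨⟨classOf e₀ x, hc.classOf_mem_block_iff.2 hx⟩, classOf e₀ x,
      mem_classRel_classOf he x, rfl⟩

end IsEquivChain

namespace IsParabolicChain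

section Quotient

variable {Y₀ : CohCfg (Sec (univ : Set Ω) e₀)} {Y₀' : CohCfg (Sec (univ : Set Ω') e₀')}
  {φ₀ : Set (Sec (univ : Set Ω) e₀ × Sec (univ : Set Ω) e₀) →
    Set (Sec (univ : Set Ω') e₀' × Sec (univ : Set Ω') e₀')}
  {g : Sec (univ : Set Ω) e₀ → Sec (univ : Set Ω') e₀'}

theorem exists_propagates_quotient (hc : IsParabolicChain X φ e₀ e₁ e₀' e₁')
    (hψ : IsPointedExtension X φ α α' Z Z' ψ)
    (hI : IsInducedMap X φ (classRel e₀) (classRel e₀') Y₀ φ₀)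
    (hreg : ∀ W, IsPointExt Y₀ (classOf e₀ α) W → ∀ V, IsRestrictionCfg W (block e₀ e₁ α) V →
      PartlyRegular V) :
    ∃ b ∈ eClass e₁ α, ∀ g ∈ pointedIsoSet Y₀ Y₀' φ₀ (classOf e₀ α) (classOf e₀' α'),
      Propagates Z ψ (eClass e₁ α)
        (matchRel (classRel e₀) (classRel e₀') (diagRel (block e₀ e₁ α)) g) b := by
  have he := hc.equivalence₀
  have hker : RelCorr Z ψ (kernel (classRel e₀)) (kernel (classRel e₀')) := by
    rw [kernel_classRel he, kernel_classRel hc.equivalence₀']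
    exact hψ.relCorr hc.relCorr₀
  rw [← hc.dom_classRel_comp_inclRel, ← kernel_inclRel]
  refine hψ.exists_propagates hI hker (mem_classRel_classOf he α)
    (mem_classRel_classOf hc.equivalence₀' α') (isPartialSurj_inclRel _) (fun W hW => ?_)
    fun W hW V hV => hreg W hW V (isImageCfg_inclRel_iff.1 hV)
  rw [kernel_inclRel]
  exact hc.isRelationOf_diagRel_block hc.isRelationOf₁ hI.isImageCfg hW

/-- Commutativity lets the step inside a class of `e₀'` be moved to the end point. -/
theorem exists_pairCorr_of_pointedIso (hc : IsParabolicChain X φ e₀ e₁ e₀' e₁')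
    (hX : IsCommutative X) (hφ : IsAlgIso X X' φ)
    (hI : IsInducedMap X φ (classRel e₀) (classRel e₀') Y₀ φ₀)
    (hg : g ∈ pointedIsoSet Y₀ Y₀' φ₀ (classOf e₀ α) (classOf e₀' α')) (b : Ω) :
    ∃ b', PairCorr X φ (α, b) (α', b') ∧ g (classOf e₀ b) = classOf e₀' b' := by
  have he := hc.equivalence₀
  have hs := X.basisRel_mem (α, b)
  obtain ⟨y', ⟨x', hx', hxy'⟩, hy'⟩ :=
    hI.map_mem_push hg.1 (mem_classRel_classOf he α) (mem_classRel_classOf he b)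
  rw [hg.2] at hx'
  have hαy' : (α', y') ∈ e₀' ○ φ (X.basisRel (α, b)) := ⟨x', hx', hxy'⟩
  have hcomp := (hφ.relCorr_comp hc.relCorr₀ (hφ.relCorr_apply hs)).subset
    (hφ.relCorr_comp (hφ.relCorr_apply hs) hc.relCorr₀) hφ
    (hX.comp_subset hc.isRelationOf₀ hs)
  obtain ⟨b', hb', hby'⟩ := hcomp hαy'
  refine ⟨b', hb', ((mem_sec_iff_eq_classOf hc.equivalence₀' _).1 hy').trans ?_⟩
  exact (classOf_eq_iff hc.equivalence₀').2 (hc.equivalence₀'.symm hby')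

end Quotient

section Restriction

variable {X₁ : CohCfg ↥(eClass e₁ α)} {X₁' : CohCfg ↥(eClass e₁' α')}
  {φ₁ : Set (↥(eClass e₁ α) × ↥(eClass e₁ α)) → Set (↥(eClass e₁' α') × ↥(eClass e₁' α'))}
  {h : ↥(eClass e₁ α) → ↥(eClass e₁' α')}

theorem mem_matchRel_inclRel_iff (hc : IsParabolicChain X φ e₀ e₁ e₀' e₁')
    (hφ : IsAlgIso X X' φ) (hI : IsInducedMap X φ (inclRel (eClass e₁ α)) (inclRel (eClass e₁' α'))
      X₁ φ₁) (hh : h ∈ IsoSet X₁ X₁' φ₁) {c : ↥(eClass e₁ α)} {x' : Ω'} :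
    (c.1, x') ∈ matchRel (inclRel (eClass e₁ α)) (inclRel (eClass e₁' α'))
      (restRel (eClass e₁ α) e₀) h ↔ ((h c).1, x') ∈ e₀' := by
  constructor
  · rintro ⟨c₁, d, hc₁, hcd, hx'⟩
    obtain rfl : c = c₁ := Subtype.ext hc₁
    obtain rfl : x' = (h d).1 := hx'
    exact (hc.relCorr₀ _ _ (hI.pairCorr_coe hh c d)).1 hcd
  · intro hx'
    have hmem : x' ∈ eClass e₁' α' := hc.equivalence₁'.trans (h c).2
      (hc.relCorr₀.subset hc.relCorr₁ hφ hc.subset hx')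
    obtain ⟨d, hd⟩ := hh.1.2 ⟨x', hmem⟩
    obtain rfl : (h d).1 = x' := congrArg Subtype.val hd
    exact ⟨c, d, rfl, (hc.relCorr₀ _ _ (hI.pairCorr_coe hh c d)).2 hx', rfl⟩

theorem exists_propagates_restriction (hc : IsParabolicChain X φ e₀ e₁ e₀' e₁')
    (hψ : IsPointedExtension X φ α α' Z Z' ψ)
    (hI : IsInducedMap X φ (inclRel (eClass e₁ α)) (inclRel (eClass e₁' α')) X₁ φ₁)
    {hα : α ∈ eClass e₁ α} {hα' : α' ∈ eClass e₁' α'}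
    (hreg : ∀ W, IsPointExt X₁ ⟨α, hα⟩ W →
      ∀ V, IsSectionCfg W univ (restRel (eClass e₁ α) e₀) V → PartlyRegular V) :
    ∃ b ∈ eClass e₁ α, ∀ h ∈ pointedIsoSet X₁ X₁' φ₁ ⟨α, hα⟩ ⟨α', hα'⟩, Propagates Z ψ (eClass e₁ α)
      (matchRel (inclRel (eClass e₁ α)) (inclRel (eClass e₁' α')) (restRel (eClass e₁ α) e₀) h)
      b := by
  have he : Equivalence fun c d => (c, d) ∈ restRel (eClass e₁ α) e₀ :=
    hc.equivalence₀.comap Subtype.val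
  have hker : RelCorr Z ψ (kernel (inclRel (eClass e₁ α))) (kernel (inclRel (eClass e₁' α'))) := by
    rw [kernel_inclRel, kernel_inclRel]
    exact hψ.isAlgIso.relCorr_diagRel_pointSet hψ.point (hψ.relCorr hc.relCorr₁)
  have hdom : (inclRel (eClass e₁ α) ○ classRel (restRel (eClass e₁ α) e₀)).dom = eClass e₁ α := by
    ext x
    constructor
    · rintro ⟨-, c, hx, -⟩
      obtain rfl : x = c.1 := hx
      exact c.2
    · exact fun hx => ⟨_, ⟨x, hx⟩, rfl, mem_classRel_classOf he _⟩
  have hprop := hψ.exists_propagates (Y' := X₁') hI hker (mem_inclRel ⟨α, hα⟩)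
    (mem_inclRel ⟨α', hα'⟩) (isPartialSurj_classRel he)
    (fun W hW => by
      rw [kernel_classRel he]
      exact hW.1.isRelationOf
        ((isImageCfg_inclRel_iff.1 hI.isImageCfg).isRelationOf_restRel hc.isRelationOf₀))
    fun W hW V hV => hreg W hW V (isImageCfg_classRel_iff.1 hV)
  rwa [hdom, kernel_classRel he] at hprop

end Restriction

section Agreement

variable {Y₀ : CohCfg (Sec (univ : Set Ω) e₀)} {Y₀' : CohCfg (Sec (univ : Set Ω') e₀')}
  {φ₀ : Set (Sec (univ : Set Ω) e₀ × Sec (univ : Set Ω) e₀) →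
    Set (Sec (univ : Set Ω') e₀' × Sec (univ : Set Ω') e₀')}
  {X₁ : CohCfg ↥(eClass e₁ α)} {X₁' : CohCfg ↥(eClass e₁' α')}
  {φ₁ : Set (↥(eClass e₁ α) × ↥(eClass e₁ α)) → Set (↥(eClass e₁' α') × ↥(eClass e₁' α'))}
  {g : Sec (univ : Set Ω) e₀ → Sec (univ : Set Ω') e₀'} {h : ↥(eClass e₁ α) → ↥(eClass e₁' α')}

theorem exists_forall_agree (hc : IsParabolicChain X φ e₀ e₁ e₀' e₁')
    (hX : IsCommutative X) (hφ : IsAlgIso X X' φ) (hext : HasExtension X X' φ α α')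
    (hfiber : ∀ Z, IsPointExt X α Z → ∀ s ∈ X.S, (pointSet s α).Nonempty →
      IsFiber Z (pointSet s α))
    (hI₀ : IsInducedMap X φ (classRel e₀) (classRel e₀') Y₀ φ₀)
    (hI₁ : IsInducedMap X φ (inclRel (eClass e₁ α)) (inclRel (eClass e₁' α')) X₁ φ₁)
    {hα : α ∈ eClass e₁ α} {hα' : α' ∈ eClass e₁' α'}
    (hreg₀ : ∀ W, IsPointExt Y₀ (classOf e₀ α) W → ∀ V, IsRestrictionCfg W (block e₀ e₁ α) V →
      PartlyRegular V)
    (hreg₁ : ∀ W, IsPointExt X₁ ⟨α, hα⟩ W →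
      ∀ V, IsSectionCfg W univ (restRel (eClass e₁ α) e₀) V → PartlyRegular V) :
    ∃ b : ↥(eClass e₁ α), ∀ g ∈ pointedIsoSet Y₀ Y₀' φ₀ (classOf e₀ α) (classOf e₀' α'),
      ∀ h ∈ pointedIsoSet X₁ X₁' φ₁ ⟨α, hα⟩ ⟨α', hα'⟩, g (classOf e₀ b) = classOf e₀' (h b) →
        Agree e₀ e₀' g h := by
  obtain ⟨Z, Z', ψ, hZ, hψ⟩ := hext.exists_isPointedExtension
  obtain ⟨b₀, hb₀, hprop₀⟩ := hc.exists_propagates_quotient (Y₀' := Y₀') hψ hI₀ hreg₀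
  obtain ⟨b₁, hb₁, hprop₁⟩ := hc.exists_propagates_restriction (X₁' := X₁') hψ hI₁ hreg₁
  refine ⟨⟨b₁, hb₁⟩, fun g hg h hh hgh c => ?_⟩
  have hM₀ := fun (x : Ω) (x' : Ω') =>
    hc.mem_matchRel_classRel_iff (α := α) (g := g) (x := x) (x' := x') hc.equivalence₀'
  have hM₁ := fun (x : ↥(eClass e₁ α)) (x' : Ω') =>
    hc.mem_matchRel_inclRel_iff hφ hI₁ hh.1 (c := x) (x' := x')
  have hM₀₁ : ∀ b₁',
      (b₁, b₁') ∈ matchRel (classRel e₀) (classRel e₀') (diagRel (block e₀ e₁ α)) g →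
        (b₁, b₁') ∈ matchRel (inclRel (eClass e₁ α)) (inclRel (eClass e₁' α'))
          (restRel (eClass e₁ α) e₀) h := by
    refine fun b₁' hb₁' => (hM₁ ⟨b₁, hb₁⟩ b₁').2 ((classOf_eq_iff hc.equivalence₀').1 ?_)
    exact hgh.symm.trans ((hM₀ _ _).1 hb₁').2
  obtain ⟨b₀', hbb', hgb₀⟩ := hc.exists_pairCorr_of_pointedIso hX hφ hI₀ hg b₀
  obtain ⟨c', hc₀, hc₁⟩ := (hprop₀ g hg).exists_common (hprop₁ h hh) hψ.isAlgIso
    (hψ.pairCorr_diag (hfiber Z hZ) hbb') ((hM₀ _ _).2 ⟨hb₀, hgb₀⟩) hb₁ hM₀₁ c.2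
  calc g (classOf e₀ c) = classOf e₀' c' := ((hM₀ _ _).1 hc₀).2
    _ = classOf e₀' (h c) := ((classOf_eq_iff hc.equivalence₀').2 ((hM₁ c c').1 hc₁)).symm

theorem exists_pointedIso_restriction (hc : IsParabolicChain X φ e₀ e₁ e₀' e₁')
    (hX : IsCommutative X) (hφ : IsAlgIso X X' φ)
    (hI₀ : IsInducedMap X φ (classRel e₀) (classRel e₀') Y₀ φ₀)
    (hI₁ : IsInducedMap X φ (inclRel (eClass e₁ α)) (inclRel (eClass e₁' α')) X₁ φ₁)
    {hα : α ∈ eClass e₁ α} {hα' : α' ∈ eClass e₁' α'}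
    (hX₁ : Schurian X₁) (hne : (IsoSet X₁ X₁' φ₁).Nonempty)
    (hg : g ∈ pointedIsoSet Y₀ Y₀' φ₀ (classOf e₀ α) (classOf e₀' α')) (b : ↥(eClass e₁ α)) :
    ∃ h ∈ pointedIsoSet X₁ X₁' φ₁ ⟨α, hα⟩ ⟨α', hα'⟩, g (classOf e₀ b) = classOf e₀' (h b) := by
  obtain ⟨b', hbb', hgb⟩ := hc.exists_pairCorr_of_pointedIso hX hφ hI₀ hg b
  have hb' : b' ∈ eClass e₁' α' := (hc.relCorr₁ _ _ hbb').1 b.2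
  obtain ⟨h, hh, hhb⟩ := hI₁.exists_pointedIso hX₁ hne (mem_inclRel ⟨α, hα⟩) (mem_inclRel b)
    (mem_inclRel ⟨α', hα'⟩) (mem_inclRel ⟨b', hb'⟩) hbb'
  exact ⟨h, hh, by rw [hgb, hhb]⟩

theorem exists_pointedIso_quotient (hc : IsParabolicChain X φ e₀ e₁ e₀' e₁')
    (hI₀ : IsInducedMap X φ (classRel e₀) (classRel e₀') Y₀ φ₀)
    (hI₁ : IsInducedMap X φ (inclRel (eClass e₁ α)) (inclRel (eClass e₁' α')) X₁ φ₁)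
    {hα : α ∈ eClass e₁ α} {hα' : α' ∈ eClass e₁' α'}
    (hY₀ : Schurian Y₀) (hne : (IsoSet Y₀ Y₀' φ₀).Nonempty)
    (hh : h ∈ pointedIsoSet X₁ X₁' φ₁ ⟨α, hα⟩ ⟨α', hα'⟩) (b : ↥(eClass e₁ α)) :
    ∃ g ∈ pointedIsoSet Y₀ Y₀' φ₀ (classOf e₀ α) (classOf e₀' α'),
      g (classOf e₀ b) = classOf e₀' (h b) := by
  have hcorr := hI₁.pairCorr_coe hh.1 ⟨α, hα⟩ b
  rw [hh.2] at hcorr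
  have he := hc.equivalence₀
  exact hI₀.exists_pointedIso hY₀ hne (mem_classRel_classOf he α) (mem_classRel_classOf he b)
    (mem_classRel_classOf hc.equivalence₀' α') (mem_classRel_classOf hc.equivalence₀' _) hcorr

end Agreement

end IsParabolicChain

theorem SesquiclosedIso.hasExtension (hφ : SesquiclosedIso X X' φ) (hX : IsScheme X) (α : Ω)
    (α' : Ω') : HasExtension X X' φ α α' := by
  have hdiag : diagRel (univ : Set Ω) ∈ X.S := by simpa [diagRel, IsScheme] using hX
  refine hφ.2 univ hdiag α (mem_univ α) α' ?_
  obtain ⟨p, hp⟩ := hφ.1.exists_pairCorr_right (α', α')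
  exact (hφ.1.relCorr_apply hdiag p _ hp).1 ⟨hφ.1.eq_of_pairCorr_diag hp, mem_univ _⟩

end Chains

end CohCfg

open CohCfg in
theorem stmt_13_general {Ω Ω' : Type u} (X : CohCfg Ω) (X' : CohCfg Ω')
    (hcomm : IsCommutative X)
    (e0 e1 : Set (Ω × Ω)) (he0 : IsParabolic X e0) (he1 : IsParabolic X e1) (h01 : e0 ⊆ e1)
    (φ : Set (Ω × Ω) → Set (Ω' × Ω')) (hφ : IsAlgIso X X' φ)
    (e0' e1' : Set (Ω' × Ω')) (he0' : e0' = algImage X φ e0) (he1' : e1' = algImage X φ e1)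
    (he0'p : IsParabolic X' e0') (he1'p : IsParabolic X' e1')
    (α : Ω) (α' : Ω') (hext : HasExtension X X' φ α α')
    (hfiber : ∀ Z, IsPointExt X α Z → ∀ s ∈ X.S, (pointSet s α).Nonempty →
      IsFiber Z (pointSet s α))
    (Y0 : CohCfg (Sec (univ : Set Ω) e0)) (hY0 : IsSectionCfg X univ e0 Y0)
    (Y0' : CohCfg (Sec (univ : Set Ω') e0')) (_hY0' : IsSectionCfg X' univ e0' Y0')
    (φ0 : Set (Sec (univ : Set Ω) e0 × Sec (univ : Set Ω) e0) →
      Set (Sec (univ : Set Ω') e0' × Sec (univ : Set Ω') e0'))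
    (hφ0 : ∀ s ∈ X.S, φ0 (secRel univ e0 s) = secRel univ e0' (φ s))
    (X1 : CohCfg ↥(eClass e1 α)) (hX1 : IsRestrictionCfg X (eClass e1 α) X1)
    (X1' : CohCfg ↥(eClass e1' α')) (_hX1' : IsRestrictionCfg X' (eClass e1' α') X1')
    (φ1 : Set (↥(eClass e1 α) × ↥(eClass e1 α)) → Set (↥(eClass e1' α') × ↥(eClass e1' α')))
    (hφ1 : ∀ s ∈ X.S, (restRel (eClass e1 α) s).Nonempty →
      φ1 (restRel (eClass e1 α) s) = restRel (eClass e1' α') (φ s))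
    (hsch0 : Schurian Y0) (hsch1 : Schurian X1)
    (hne0 : (IsoSet Y0 Y0' φ0).Nonempty) (hne1 : (IsoSet X1 X1' φ1).Nonempty)
    (hpr0 : ∀ Z0, IsPointExt Y0 (classOf e0 α) Z0 →
      ∀ W, IsRestrictionCfg Z0 (block e0 e1 α) W → PartlyRegular W)
    (hpr1 : ∀ Z1, IsPointExt X1 ⟨α, he1.2.1 α⟩ Z1 →
      ∀ W, IsSectionCfg Z1 univ (restRel (eClass e1 α) e0) W → PartlyRegular W) :
    {k : Sec (eClass e1 α) e0 → Sec (eClass e1' α') e0' |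
      ∃ g ∈ IsoSet Y0 Y0' φ0, g (classOf e0 α) = classOf e0' α' ∧
        (∀ G : Sec (univ : Set Ω) e0, (G.1 ∩ eClass e1 α).Nonempty →
          ((g G).1 ∩ eClass e1' α').Nonempty) ∧
        ∀ (Γ : Sec (eClass e1 α) e0) (G : Sec (univ : Set Ω) e0),
          Γ.1 = G.1 → (k Γ).1 = (g G).1} =
    {k : Sec (eClass e1 α) e0 → Sec (eClass e1' α') e0' |
      ∃ h ∈ IsoSet X1 X1' φ1, h ⟨α, he1.2.1 α⟩ = ⟨α', he1'p.2.1 α'⟩ ∧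
        relImage h (restRel (eClass e1 α) e0) = restRel (eClass e1' α') e0' ∧
        ∀ (Γ : Sec (eClass e1 α) e0) (a : ↥(eClass e1 α)),
          a.1 ∈ Γ.1 → (h a).1 ∈ (k Γ).1} := by
  have hc : IsParabolicChain X φ e0 e1 e0' e1' :=
    ⟨⟨he0.equivalence, he1.equivalence, h01⟩, he0.1, he1.1, he0'p.equivalence, he1'p.equivalence,
      he0' ▸ hφ.relCorr_algImage he0.1, he1' ▸ hφ.relCorr_algImage he1.1⟩
  have hI₀ := isInducedMap_classRel he0.equivalence he0'p.equivalence hY0 hφ0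
  have hI₁ := isInducedMap_inclRel hX1 hφ1
  obtain ⟨b, hagree⟩ := hc.exists_forall_agree (Y₀' := Y0') (X₁' := X1') (hα' := he1'p.2.1 α')
    hcomm hφ hext hfiber hI₀ hI₁ hpr0 hpr1
  ext k
  constructor
  · rintro ⟨g, hg, hgα, -, hk⟩
    obtain ⟨h, hh, hgh⟩ :=
      hc.exists_pointedIso_restriction hcomm hφ hI₀ hI₁ hsch1 hne1 ⟨hg, hgα⟩ b
    have hgh := hagree g ⟨hg, hgα⟩ h hh hgh
    have hres : relImage h (restRel (eClass e1 α) e0) = restRel (eClass e1' α') e0' :=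
      relImage_restRel hh.1.1.2 fun x y => hc.relCorr₀ _ _ (hI₁.pairCorr_coe hh.1 x y)
    exact ⟨h, hh.1, hh.2, hres,
      (hgh.forall_eq_iff_forall_mem he0.equivalence he0'p.equivalence).1 hk⟩
  · rintro ⟨h, hh, hhα, -, hk⟩
    obtain ⟨g, hg, hgh⟩ := hc.exists_pointedIso_quotient hI₀ hI₁ hsch0 hne0 ⟨hh, hhα⟩ b
    have hgh := hagree g hg h ⟨hh, hhα⟩ hgh
    exact ⟨g, hg.1, hg.2, hgh.inter_nonempty he0.equivalence he0'p.equivalence,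
      (hgh.forall_eq_iff_forall_mem he0.equivalence he0'p.equivalence).2 hk⟩

open CohCfg in
/-- Lemma: let `X` be a sesquiclosed commutative scheme satisfying the
`e₁/e₀`-condition, `X'` a scheme, `φ : X → X'` a sesquiclosed algebraic
isomorphism, and `α, α'` points.  Assume (i) `X₀` and `X₁ = X_Δ` are schurian
and `Iso(X₀,X'₀,φ₀) ≠ ∅ ≠ Iso(X₁,X'₁,φ₁)`, and (ii) `((X₀)_{α₀})_{Δ₀}` and
`((X₁)_α)_{Δ₀}` are partly regular.  Then
`Iso_{α₀,α'₀}(X₀,X'₀,φ₀)^{Δ₀} = Iso_{α,α'}(X₁,X'₁,φ₁)^{Δ₀}`. -/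
theorem stmt_13 {Ω Ω' : Type u} (X : CohCfg Ω) (X' : CohCfg Ω')
    (hX : IsScheme X) (hcomm : IsCommutative X) (hsq : SesquiclosedCfg X)
    (hX' : IsScheme X')
    (e0 e1 : Set (Ω × Ω)) (he0 : IsParabolic X e0) (he1 : IsParabolic X e1)
    (h01 : e0 ⊆ e1) (hw : WedgeCond X e0 e1)
    (φ : Set (Ω × Ω) → Set (Ω' × Ω')) (hφ : SesquiclosedIso X X' φ)
    (e0' e1' : Set (Ω' × Ω')) (he0' : e0' = algImage X φ e0)
    (he1' : e1' = algImage X φ e1)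
    (he0'p : IsParabolic X' e0') (he1'p : IsParabolic X' e1')
    (α : Ω) (α' : Ω')
    -- the quotient configurations X₀, X'₀ and the induced φ₀
    (Y0 : CohCfg (Sec (univ : Set Ω) e0)) (hY0 : IsSectionCfg X univ e0 Y0)
    (Y0' : CohCfg (Sec (univ : Set Ω') e0')) (hY0' : IsSectionCfg X' univ e0' Y0')
    (φ0 : Set (Sec (univ : Set Ω) e0 × Sec (univ : Set Ω) e0) →
          Set (Sec (univ : Set Ω') e0' × Sec (univ : Set Ω') e0'))
    (hφ0 : ∀ s ∈ X.S, φ0 (secRel univ e0 s) = secRel univ e0' (φ s))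
    -- the restrictions X₁ = X_Δ, X'₁ = X'_{Δ'} and the induced φ₁
    (X1 : CohCfg ↥(eClass e1 α)) (hX1 : IsRestrictionCfg X (eClass e1 α) X1)
    (X1' : CohCfg ↥(eClass e1' α')) (hX1' : IsRestrictionCfg X' (eClass e1' α') X1')
    (φ1 : Set (↥(eClass e1 α) × ↥(eClass e1 α)) →
          Set (↥(eClass e1' α') × ↥(eClass e1' α')))
    (hφ1 : ∀ s ∈ X.S, (restRel (eClass e1 α) s).Nonempty →
       φ1 (restRel (eClass e1 α) s) = restRel (eClass e1' α') (φ s))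
    -- hypothesis (i)
    (hsch0 : Schurian Y0) (hsch1 : Schurian X1)
    (hne0 : (IsoSet Y0 Y0' φ0).Nonempty) (hne1 : (IsoSet X1 X1' φ1).Nonempty)
    -- hypothesis (ii): ((X₀)_{α₀})_{Δ₀} is partly regular
    (hpr0 : ∀ Z0 : CohCfg (Sec (univ : Set Ω) e0),
       IsPointExt Y0 (⟨eClass e0 α, α, mem_univ α, rfl⟩ : Sec (univ : Set Ω) e0) Z0 →
       ∀ W : CohCfg ↥{G : Sec (univ : Set Ω) e0 | (G.1 ∩ eClass e1 α).Nonempty},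
         IsRestrictionCfg Z0 {G | (G.1 ∩ eClass e1 α).Nonempty} W → PartlyRegular W)
    -- hypothesis (ii): ((X₁)_α)_{Δ₀} is partly regular
    (hpr1 : ∀ Z1 : CohCfg ↥(eClass e1 α),
       IsPointExt X1 (⟨α, he1.2.1 α⟩ : ↥(eClass e1 α)) Z1 →
       ∀ W : CohCfg (Sec (univ : Set ↥(eClass e1 α)) (restRel (eClass e1 α) e0)),
         IsSectionCfg Z1 univ (restRel (eClass e1 α) e0) W → PartlyRegular W) :
    {k : Sec (eClass e1 α) e0 → Sec (eClass e1' α') e0' |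
      ∃ g ∈ IsoSet Y0 Y0' φ0,
        g ⟨eClass e0 α, α, mem_univ α, rfl⟩ =
          ⟨eClass e0' α', α', mem_univ α', rfl⟩ ∧
        (∀ G : Sec (univ : Set Ω) e0, (G.1 ∩ eClass e1 α).Nonempty →
          ((g G).1 ∩ eClass e1' α').Nonempty) ∧
        ∀ (Γ : Sec (eClass e1 α) e0) (G : Sec (univ : Set Ω) e0),
          Γ.1 = G.1 → (k Γ).1 = (g G).1} =
    {k : Sec (eClass e1 α) e0 → Sec (eClass e1' α') e0' |
      ∃ h ∈ IsoSet X1 X1' φ1,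
        h ⟨α, he1.2.1 α⟩ = ⟨α', he1'p.2.1 α'⟩ ∧
        relImage h (restRel (eClass e1 α) e0) = restRel (eClass e1' α') e0' ∧
        ∀ (Γ : Sec (eClass e1 α) e0) (a : ↥(eClass e1 α)),
          a.1 ∈ Γ.1 → (h a).1 ∈ (k Γ).1} := by
  exact stmt_13_general X X' hcomm e0 e1 he0 he1 h01 φ hφ.1 e0' e1' he0' he1' he0'p he1'p α α'
    (hφ.hasExtension hX α α') (fun Z hZ s hs hne => (hsq.1 α Z hZ _).2 ⟨s, hs, rfl, hne⟩)
    Y0 hY0 Y0' hY0' φ0 hφ0 X1 hX1 X1' hX1' φ1 hφ1 hsch0 hsch1 hne0 hne1 hpr0 hpr1
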